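/- (Chain rule for the regularized solution.) Under the assumptions of the main theorem, let p ∈ X₂ be a weak solution, p_ε = ρ_ε ∗ p, and β ∈ C²(ℝ). Then p_ε ∈ W^{1,1}_loc([0,T]×ℝⁿ) and, in the distributional sense: ∂_t β(p_ε) + ∂_i(β(p_ε) b_i) − (1/2)∂_i(σ_{ik}σ_{jk}∂_j β(p_ε)) − (β(p_ε) − p_ε β'(p_ε)) div(b) + (1/2)β''(p_ε)|σ*∇p_ε|² = β'(p_ε)[U_ε − Q_{2,ε} + (1/2)∂_i(σ_{ik}R_{k,ε})], where U_ε = −Q_{1,ε} + (1/2)(S_ε + T_ε), Q_{1,ε} = [ρ_ε, div(b)](p), Q_{2,ε} = [ρ_ε, b_i∂_i](p), S_ε = [ρ_ε, ∂_iσ_{ik}](σ_{jk}∂_j p), T_ε = [ρ_ε, σ_{ik}∂_i](σ_{jk}∂_j p), R_{k,ε} = [ρ_ε, σ_{jk}∂_j](p). -/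

import Mathlib

open MeasureTheory Metric Filter Set Function
open scoped ENNReal Topology RealInnerProductSpace

noncomputable section

/-- Euclidean space `ℝⁿ`. -/
abbrev Rn (n : ℕ) := EuclideanSpace ℝ (Fin n)

namespace FP

variable {n m : ℕ}

/-- Spatial convolution `(f ⋆ g)(x) = ∫ f(y) g(x - y) dy`. -/
def conv (f g : Rn n → ℝ) (x : Rn n) : ℝ := ∫ y, f y * g (x - y)

/-- The rescaled kernel `ρ_ε(x) = ε^{-n} ρ(x/ε)`. -/
def moll (ρ : Rn n → ℝ) (ε : ℝ) (x : Rn n) : ℝ := (ε ^ n)⁻¹ * ρ (ε⁻¹ • x)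

/-- The class `𝒦` of convolution kernels: smooth, nonnegative, supported in the
open unit ball and of total mass one. -/
structure IsKernel (ρ : Rn n → ℝ) : Prop where
  smooth : ContDiff ℝ (⊤ : ℕ∞) ρ
  supp : tsupport ρ ⊆ ball (0 : Rn n) 1
  nonneg : ∀ x, 0 ≤ ρ x
  total : (∫ x, ρ x) = 1

/-- `i`-th spatial partial derivative (of a smooth function). -/
def pd (i : Fin n) (f : Rn n → ℝ) (x : Rn n) : ℝ :=
  fderiv ℝ f x (EuclideanSpace.single i 1)

/-- Time derivative of a time-dependent function. -/
def pt (φ : ℝ → Rn n → ℝ) (t : ℝ) (x : Rn n) : ℝ := deriv (fun s => φ s x) t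

/-- Spatial test functions `C_c^∞(ℝⁿ)`. -/
def TestS (ψ : Rn n → ℝ) : Prop := ContDiff ℝ (⊤ : ℕ∞) ψ ∧ HasCompactSupport ψ

/-- Space-time test functions `C_c^∞([0,T) × ℝⁿ)`. -/
def TestT (T : ℝ) (φ : ℝ → Rn n → ℝ) : Prop :=
  ContDiff ℝ (⊤ : ℕ∞) (uncurry φ) ∧ HasCompactSupport (uncurry φ) ∧
    ∀ t x, T ≤ t → φ t x = 0

/-- Space-time test functions compactly supported in `(0,T) × ℝⁿ`. -/
def TestO (T : ℝ) (φ : ℝ → Rn n → ℝ) : Prop :=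
  ContDiff ℝ (⊤ : ℕ∞) (uncurry φ) ∧ HasCompactSupport (uncurry φ) ∧
    ∀ t x, (t ≤ 0 ∨ T ≤ t) → φ t x = 0

/-- `g` is the `j`-th distributional partial derivative of `f`. -/
def HasWeakPd (j : Fin n) (f g : Rn n → ℝ) : Prop :=
  ∀ ψ : Rn n → ℝ, TestS ψ → ∫ x, f x * pd j ψ x = - ∫ x, g x * ψ x

/-- The distributional divergence `D·c` of `c` is absolutely continuous with density `d`. -/
def HasWeakDiv (c : Rn n → Rn n) (d : Rn n → ℝ) : Prop :=
  ∀ ψ : Rn n → ℝ, TestS ψ → ∫ x, ⟪c x, gradient ψ x⟫ = - ∫ x, d x * ψ x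

/-- `b ∈ BV_loc(ℝⁿ;ℝⁿ)`, with derivative matrix measure `Db = M |Db|`, represented by the
locally finite (total variation) measure `ν = |Db|` together with the polar matrix `M`
(of unit Frobenius norm `ν`-a.e.), i.e. `∂_j b_i = M_{ij} ν` distributionally. -/
structure IsBVRepr (b : Rn n → Rn n) (ν : Measure (Rn n)) (M : Rn n → Fin n → Fin n → ℝ) :
    Prop where
  locfin : ∀ R : ℝ, ν (ball 0 R) < ⊤
  unit : ∀ᵐ x ∂ν, (∑ i, ∑ j, (M x i j) ^ 2) = 1
  repr : ∀ (i j : Fin n) (ψ : Rn n → ℝ), TestS ψ →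
    ∫ x, b x i * pd j ψ x = - ∫ x, ψ x * M x i j ∂ν

/-- `f ∈ L^q([0,T], L^r_loc(ℝⁿ))`. -/
def MemLLoc (T q r : ℝ) (f : ℝ → Rn n → ℝ) : Prop :=
  Measurable (uncurry f) ∧
  ∀ R : ℝ, 0 < R →
    (∫⁻ t in Ioc (0:ℝ) T,
      (∫⁻ x in ball (0 : Rn n) R, ENNReal.ofReal (|f t x| ^ r)) ^ (q / r)) < ⊤

/-- Convergence to `0` in `L^q([0,T], L^r_loc(ℝⁿ))` as `ε → 0⁺`. -/
def TendstoLLoc (T q r : ℝ) (u : ℝ → ℝ → Rn n → ℝ) : Prop :=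
  ∀ R : ℝ, 0 < R →
    Tendsto (fun ε => ∫⁻ t in Ioc (0:ℝ) T,
        (∫⁻ x in ball (0 : Rn n) R, ENNReal.ofReal (|u ε t x| ^ r)) ^ (q / r))
      (𝓝[>] (0:ℝ)) (𝓝 0)

/-- `c ∈ L^q([0,T], W^{1,r}_loc(ℝⁿ;ℝⁿ))`, with weak Jacobian `Dc` (`Dc t x i j = ∂_j c_i(t,x)`). -/
def MemW1Loc (T q r : ℝ) (c : ℝ → Rn n → Rn n) (Dc : ℝ → Rn n → Fin n → Fin n → ℝ) : Prop :=
  Measurable (uncurry c) ∧ Measurable (uncurry Dc) ∧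
  (∀ᵐ t ∂volume.restrict (Ioc (0:ℝ) T), ∀ i j,
      HasWeakPd j (fun x => c t x i) (fun x => Dc t x i j)) ∧
  ∀ R : ℝ, 0 < R →
    (∫⁻ t in Ioc (0:ℝ) T, (∫⁻ x in ball (0 : Rn n) R,
        ENNReal.ofReal (‖c t x‖ ^ r + ∑ i, ∑ j, |Dc t x i j| ^ r)) ^ (q / r)) < ⊤

/-- The multiplication-form commutator `[ρ_ε, g](f) = ρ_ε ∗ (g f) − g (ρ_ε ∗ f)`. -/
def commMul (ρε : Rn n → ℝ) (g f : Rn n → ℝ) (x : Rn n) : ℝ :=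
  conv (fun y => g y * f y) ρε x - g x * conv f ρε x

/-- The mollification `ρ_ε ∗ (c_i ∂_i f)` of the distribution `c·∇f = div(fc) - f div(c)`,
where `d = div(c)`:  `ρ_ε ∗ (c_i ∂_i f) = Σ_i (f c_i) ∗ ∂_i ρ_ε − (f d) ∗ ρ_ε`. -/
def convDer (ρε : Rn n → ℝ) (c : Rn n → Rn n) (d f : Rn n → ℝ) (x : Rn n) : ℝ :=
  (∑ i, conv (fun y => f y * c y i) (pd i ρε) x) - conv (fun y => f y * d y) ρε x

/-- The derivative-form commutator `[ρ_ε, c_i ∂_i](f) = ρ_ε ∗ (c_i ∂_i f) − c_i ∂_i(ρ_ε ∗ f)`,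
where `d = div(c)`. -/
def commDer (ρε : Rn n → ℝ) (c : Rn n → Rn n) (d f : Rn n → ℝ) (x : Rn n) : ℝ :=
  convDer ρε c d f x - ∑ i, c x i * conv f (pd i ρε) x

/-- The commutator `[ρ_ε, b_i ∂_i](f)` for a BV vector field `b` whose derivative matrix
measure is `Db = M ν`, so that `D·b = (Σ_i M_{ii}) ν`. -/
def commDerBV (ρε : Rn n → ℝ) (b : Rn n → Rn n) (ν : Measure (Rn n))
    (M : Rn n → Fin n → Fin n → ℝ) (f : Rn n → ℝ) (x : Rn n) : ℝ :=
  (∑ i, conv (fun y => f y * b y i) (pd i ρε) x)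
    - (∫ y, f y * ρε (x - y) * ∑ i, M y i i ∂ν)
    - ∑ i, b x i * conv f (pd i ρε) x

/-- `b/(1+|x|) ∈ (L¹([0,T], L¹ + L^∞(ℝⁿ)))ⁿ`. -/
def BGrowth (T : ℝ) (b : ℝ → Rn n → Rn n) : Prop :=
  ∃ b₁ b₂ : ℝ → Rn n → Rn n,
    Measurable (uncurry b₁) ∧ Measurable (uncurry b₂) ∧
    (∀ t x, b t x = b₁ t x + b₂ t x) ∧
    (∫⁻ t in Ioc (0:ℝ) T, ∫⁻ x, ENNReal.ofReal (‖b₁ t x‖ / (1 + ‖x‖))) < ⊤ ∧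
    (∫⁻ t in Ioc (0:ℝ) T, eLpNorm (fun x : Rn n => ‖b₂ t x‖ / (1 + ‖x‖)) ⊤ volume) < ⊤

/-- `σ/(1+|x|) ∈ (L²([0,T], L² + L^∞(ℝⁿ)))^{n×m}`
(`σ t x k ∈ ℝⁿ` is the `k`-th column `(σ_{ik}(t,x))_i` of `σ`). -/
def SGrowth (T : ℝ) (σ : ℝ → Rn n → Fin m → Rn n) : Prop :=
  ∃ σ₁ σ₂ : ℝ → Rn n → Fin m → Rn n,
    Measurable (uncurry σ₁) ∧ Measurable (uncurry σ₂) ∧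
    (∀ t x k, σ t x k = σ₁ t x k + σ₂ t x k) ∧
    (∫⁻ t in Ioc (0:ℝ) T, ∫⁻ x, ENNReal.ofReal ((∑ k, ‖σ₁ t x k‖ ^ 2) / (1 + ‖x‖) ^ 2)) < ⊤ ∧
    (∫⁻ t in Ioc (0:ℝ) T,
      (eLpNorm (fun x : Rn n => Real.sqrt (∑ k, ‖σ₂ t x k‖ ^ 2) / (1 + ‖x‖)) ⊤ volume) ^ 2) < ⊤

/-- `b ∈ (L¹([0,T], BV_loc(ℝⁿ)))ⁿ`, via the representation `Db_t = M_t ν_t`. -/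
def BVt (T : ℝ) (b : ℝ → Rn n → Rn n) (ν : ℝ → Measure (Rn n))
    (M : ℝ → Rn n → Fin n → Fin n → ℝ) : Prop :=
  Measurable (uncurry b) ∧
  (∀ᵐ t ∂volume.restrict (Ioc (0:ℝ) T), IsBVRepr (b t) (ν t) (M t)) ∧
  ∀ R : ℝ, 0 < R →
    (∫⁻ t in Ioc (0:ℝ) T,
      ((∫⁻ x in ball (0 : Rn n) R, (‖b t x‖₊ : ℝ≥0∞)) + ν t (ball 0 R))) < ⊤

/-- The divergence measure `D·b_t` is absolutely continuous with density
`div(b) ∈ L¹([0,T], L¹_loc(ℝⁿ))`. -/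
def DivB (T : ℝ) (b : ℝ → Rn n → Rn n) (divb : ℝ → Rn n → ℝ) : Prop :=
  Measurable (uncurry divb) ∧
  (∀ᵐ t ∂volume.restrict (Ioc (0:ℝ) T), HasWeakDiv (b t) (divb t)) ∧
  ∀ R : ℝ, 0 < R →
    (∫⁻ t in Ioc (0:ℝ) T, ∫⁻ x in ball (0 : Rn n) R, (‖divb t x‖₊ : ℝ≥0∞)) < ⊤

/-- `[div(b)]⁻ ∈ L¹([0,T], L^∞(ℝⁿ))`. -/
def DivBNeg (T : ℝ) (divb : ℝ → Rn n → ℝ) : Prop :=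
  (∫⁻ t in Ioc (0:ℝ) T, eLpNorm (fun x : Rn n => max (-(divb t x)) 0) ⊤ volume) < ⊤

/-- `σ ∈ (L²([0,T], W^{1,2}_loc(ℝⁿ)))^{n×m}`, with weak partial derivatives
`Dσ t x k i j = ∂_j σ_{ik}(t,x)`. -/
def SigmaW (T : ℝ) (σ : ℝ → Rn n → Fin m → Rn n)
    (Dσ : ℝ → Rn n → Fin m → Fin n → Fin n → ℝ) : Prop :=
  Measurable (uncurry σ) ∧ Measurable (uncurry Dσ) ∧
  (∀ᵐ t ∂volume.restrict (Ioc (0:ℝ) T), ∀ k i j,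
      HasWeakPd j (fun x => σ t x k i) (fun x => Dσ t x k i j)) ∧
  ∀ R : ℝ, 0 < R →
    (∫⁻ t in Ioc (0:ℝ) T, ∫⁻ x in ball (0 : Rn n) R,
      ENNReal.ofReal (∑ k, (‖σ t x k‖ ^ 2 + ∑ i, ∑ j, (Dσ t x k i j) ^ 2))) < ⊤

/-- The divergence `Σ_i ∂_i σ_{ik}` of the `k`-th column of `σ`, from the weak Jacobian. -/
def dvg (Dσ : ℝ → Rn n → Fin m → Fin n → Fin n → ℝ) (t : ℝ) (x : Rn n) (k : Fin m) : ℝ :=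
  ∑ i, Dσ t x k i i

/-- `G = σ^*∇p` in the distributional sense:
`G_k = Σ_j σ_{jk} ∂_j p = Σ_j ∂_j(σ_{jk} p) − p Σ_j ∂_j σ_{jk}` for a.e. `t ∈ (0,T)`. -/
def IsSigmaGrad (T : ℝ) (σ : ℝ → Rn n → Fin m → Rn n)
    (Dσ : ℝ → Rn n → Fin m → Fin n → Fin n → ℝ)
    (p : ℝ → Rn n → ℝ) (G : ℝ → Rn n → Fin m → ℝ) : Prop :=
  ∀ᵐ t ∂volume.restrict (Ioc (0:ℝ) T), ∀ (k : Fin m) (ψ : Rn n → ℝ), TestS ψ →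
    ∫ x, G t x k * ψ x
      = - ∫ x, p t x * (⟪σ t x k, gradient ψ x⟫ + dvg Dσ t x k * ψ x)

/-- `p ∈ L^∞([0,T], L^e ∩ L^∞)` and `G = σ^*∇p ∈ L²([0,T], L²)`. -/
def MemX (T : ℝ) (e : ℝ≥0∞) (p : ℝ → Rn n → ℝ) (G : ℝ → Rn n → Fin m → ℝ) : Prop :=
  Measurable (uncurry p) ∧ Measurable (uncurry G) ∧
  (∃ C : ℝ≥0∞, C < ⊤ ∧ ∀ᵐ t ∂volume.restrict (Ioc (0:ℝ) T),
      eLpNorm (p t) e volume ≤ C ∧ eLpNorm (p t) ⊤ volume ≤ C) ∧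
  (∫⁻ t in Ioc (0:ℝ) T, ∫⁻ x, ENNReal.ofReal (∑ k, (G t x k) ^ 2)) < ⊤

/-- Weak solution of `∂_t p + ∂_i(p b_i) − ½ ∂_i(σ_{ik} σ_{jk} ∂_j p) = 0` with initial
condition `p₀`, where `G = σ^*∇p`. -/
def IsWeakSol (T : ℝ) (b : ℝ → Rn n → Rn n) (σ : ℝ → Rn n → Fin m → Rn n)
    (p : ℝ → Rn n → ℝ) (G : ℝ → Rn n → Fin m → ℝ) (p0 : Rn n → ℝ) : Prop :=
  ∀ φ : ℝ → Rn n → ℝ, TestT T φ →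
    (∫ t in Ioc (0:ℝ) T, ∫ x, p t x * pt φ t x) + ∫ x, p0 x * φ 0 x
      = - (∫ t in Ioc (0:ℝ) T, ∫ x, p t x * ⟪b t x, gradient (φ t) x⟫)
        + (1/2) * ∫ t in Ioc (0:ℝ) T, ∫ x, ∑ k, G t x k * ⟪σ t x k, gradient (φ t) x⟫

/-- All the hypotheses of the main theorem on the coefficients `b` and `σ`. -/
def MainHyp (T : ℝ) (b : ℝ → Rn n → Rn n) (ν : ℝ → Measure (Rn n))
    (M : ℝ → Rn n → Fin n → Fin n → ℝ) (divb : ℝ → Rn n → ℝ)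
    (σ : ℝ → Rn n → Fin m → Rn n) (Dσ : ℝ → Rn n → Fin m → Fin n → Fin n → ℝ) : Prop :=
  BVt T b ν M ∧ BGrowth T b ∧ DivB T b divb ∧ DivBNeg T divb ∧ SigmaW T σ Dσ ∧ SGrowth T σ

/-- The anisotropic functional `Λ(A, ρ) = ∫ |⟨Az, ∇ρ(z)⟩| dz`. -/
def Lam (A : Fin n → Fin n → ℝ) (ρ : Rn n → ℝ) : ℝ :=
  ∫ z : Rn n, |∑ i, (∑ j, A i j * z j) * gradient ρ z i|

/-- The functional `I(ρ) = ∫ |z| |∇ρ(z)| dz`. -/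
def Irho (ρ : Rn n → ℝ) : ℝ := ∫ z : Rn n, ‖z‖ * ‖gradient ρ z‖

/-- The error term `S_ε = [ρ_ε, ∂_i σ_{ik}](σ_{jk} ∂_j p)`,
where `dσ x k = Σ_i ∂_i σ_{ik}(x)` and `G = σ^*∇p`. -/
def Sterm (ρε : Rn n → ℝ) (dσ : Rn n → Fin m → ℝ) (G : Rn n → Fin m → ℝ) (x : Rn n) : ℝ :=
  ∑ k, commMul ρε (fun y => dσ y k) (fun y => G y k) x

/-- The error term `T_ε = [ρ_ε, σ_{ik} ∂_i](σ_{jk} ∂_j p)`. -/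
def Tterm (ρε : Rn n → ℝ) (σ : Rn n → Fin m → Rn n) (dσ : Rn n → Fin m → ℝ)
    (G : Rn n → Fin m → ℝ) (x : Rn n) : ℝ :=
  ∑ k, commDer ρε (fun y => σ y k) (fun y => dσ y k) (fun y => G y k) x

/-- The error term `R_{k,ε} = [ρ_ε, σ_{jk} ∂_j](p)`. -/
def Rterm (ρε : Rn n → ℝ) (σ : Rn n → Fin m → Rn n) (dσ : Rn n → Fin m → ℝ)
    (p : Rn n → ℝ) (k : Fin m) (x : Rn n) : ℝ :=
  commDer ρε (fun y => σ y k) (fun y => dσ y k) p x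

/-- The combined error term `U_ε = −Q_{1,ε} + ½ (S_ε + T_ε)`. -/
def Uterm (ρε : Rn n → ℝ) (divb : Rn n → ℝ) (σ : Rn n → Fin m → Rn n)
    (dσ : Rn n → Fin m → ℝ) (p : Rn n → ℝ) (G : Rn n → Fin m → ℝ) (x : Rn n) : ℝ :=
  - commMul ρε divb p x + (1/2) * (Sterm ρε dσ G x + Tterm ρε σ dσ G x)

/-- The classical `k`-th component `(σ^*∇p_ε)_k = Σ_j σ_{jk} ∂_j(ρ_ε ∗ p)` of the
regularized solution. -/
def sgradE (ρε : Rn n → ℝ) (σ : Rn n → Fin m → Rn n) (p : Rn n → ℝ) (k : Fin m)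
    (x : Rn n) : ℝ :=
  ∑ j, σ x k j * conv p (pd j ρε) x

end FP

/-!
Idea of the proof. Write `u = p_ε = ρ_ε ∗ p` and `g_k = ρ_ε ∗ G_k`, both smooth in `x`.

*Time.* Testing the weak formulation with `η(t) ρ_ε(x - y)` for fixed `x` shows that `t ↦ u(t,x)` has
the integrable weak derivative `q = -∂_iρ_ε ∗ (p b_i) + ½ ∂_iρ_ε ∗ (G_k σ_{ik})`
(`Facts.kernel_eq`). Hence `u(·,x)` agrees almost everywhere with an absolutely continuous function,
`β(u)` has weak time derivative `β'(u) q` for every `x` (`chain_one_dim`), and Fubini's theorem gives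
the same statement in space-time (`Facts.time_identity`). With `β = id` and the bounds `Facts.qE_LL1`
and `LL1.conv` this is the `W^{1,1}_loc` regularity of `u`.

*Space.* For almost every `t` the definition of `G = σ^*∇p` gives `R_{k,ε} = g_k - σ_k·∇u`
(`convDer_eq`). After this substitution the remaining identity is algebraic: the two integrands
of the chain rule differ by `-β(u) ∂_tφ - β'(u) q φ` and by the integrands of
`∫ (b·∇ψ + div(b) ψ) = 0` with `ψ = β(u) φ`, and of `∫ (σ_k·∇ψ_k + div(σ_k) ψ_k) = 0` with
`ψ_k = g_k β'(u) φ` (`spatial_identity`). As `β` is only `C²`, these `ψ_k` are only `C¹`, so the weak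
divergences are first extended to `C¹` test functions by mollification (`weakDiv_C1`).

The Bochner integral of a non-integrable function is `0`, so integrability has to be followed. In `x`,
for almost every `t`, the left integrand is integrable (`lhs_integrable`), and this suffices to split
the integrals. In `t`, the spatial integrals of the two sides differ by an integrable function with zero
integral, so that their integrals agree whether or not they are integrable
(`integral_add_of_zero`).
-/

/-! ### One-variable chain rule -/

namespace FP

/-- A `C¹` function of an absolutely continuous function is absolutely continuous. -/
lemma ac_comp {β : ℝ → ℝ} (hβ : ContDiff ℝ 1 β) {W : ℝ → ℝ} {a b : ℝ}
    (hW : AbsolutelyContinuousOnInterval W a b) :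
    AbsolutelyContinuousOnInterval (fun t => β (W t)) a b := by
  -- on the bounded range of `W` the function `β` is Lipschitz
  obtain ⟨C, hC⟩ := hW.exists_bound
  obtain ⟨K, hK⟩ := hβ.contDiffOn.exists_lipschitzOnWith one_ne_zero
    (convex_closedBall (0:ℝ) C) (isCompact_closedBall (0:ℝ) C)
  have hlim := Tendsto.const_mul (K:ℝ) hW
  rw [mul_zero] at hlim
  refine squeeze_zero' (Eventually.of_forall fun E => Finset.sum_nonneg fun i _ => dist_nonneg) ?_ hlim
  have : ∀ᶠ E in (AbsolutelyContinuousOnInterval.totalLengthFilter ⊓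
      𝓟 (AbsolutelyContinuousOnInterval.disjWithin a b)),
      E ∈ AbsolutelyContinuousOnInterval.disjWithin a b :=
    mem_inf_of_right (mem_principal_self _)
  filter_upwards [this] with E hE
  rw [Finset.mul_sum]
  refine Finset.sum_le_sum fun i hi => ?_
  have h := hE.1 i hi
  refine hK.dist_le_mul _ ?_ _ ?_
  · simpa using hC _ h.1
  · simpa using hC _ h.2

/-- The primitive of an integrable function may be integrated by parts, after composition with
a `C¹` function, against a `C¹` function vanishing at the end points. -/
lemma primitive_chain {T : ℝ} (hT : 0 < T) {q : ℝ → ℝ} (hq : IntegrableOn q (Ioc 0 T)) (c : ℝ)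
    {β : ℝ → ℝ} (hβ : ContDiff ℝ 1 β) {θ : ℝ → ℝ} (hθ : ContDiff ℝ 1 θ) (h0 : θ 0 = 0)
    (h1 : θ T = 0) :
    ∫ t in Ioc 0 T, β (c + ∫ s in (0:ℝ)..t, q s) * deriv θ t
      = - ∫ t in Ioc 0 T, deriv β (c + ∫ s in (0:ℝ)..t, q s) * q t * θ t := by
  have hqi : IntervalIntegrable q volume 0 T :=
    (intervalIntegrable_iff_integrableOn_Ioc_of_le hT.le).2 hq
  have hV := hqi.absolutelyContinuousOnInterval_intervalIntegral (c := 0) (by simp)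
  have hc : AbsolutelyContinuousOnInterval (fun _ : ℝ => c) 0 T :=
    (contDiff_const (n := 1)).contDiffOn.absolutelyContinuousOnInterval
  have hB := ac_comp hβ (hc.fun_add hV)
  have hθ' : AbsolutelyContinuousOnInterval θ 0 T :=
    hθ.contDiffOn.absolutelyContinuousOnInterval
  have key := hB.integral_mul_deriv_eq_deriv_mul hθ'
  rw [h0, h1, mul_zero, mul_zero, sub_zero, zero_sub, intervalIntegral.integral_of_le hT.le,
    intervalIntegral.integral_of_le hT.le] at key
  rw [key]
  congr 1
  refine setIntegral_congr_ae measurableSet_Ioc ?_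
  filter_upwards [hqi.ae_hasDerivAt_integral] with t ht hmem
  have h2 := (ht (uIoc_subset_uIcc (by rwa [uIoc_of_le hT.le])) 0 (by simp)).const_add c
  have h3 := ((hβ.differentiable one_ne_zero _).hasDerivAt).comp t h2
  rw [show deriv (fun t => β (c + ∫ s in (0:ℝ)..t, q s)) t = _ from h3.deriv]

/-- Du Bois-Reymond lemma on `(0,T)`: a function that annihilates the derivatives of all test
functions is almost everywhere constant. -/
lemma du_bois_reymond {T : ℝ} (hT : 0 < T) {w : ℝ → ℝ} (hw : IntegrableOn w (Ioc 0 T))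
    (h : ∀ η : ℝ → ℝ, ContDiff ℝ (⊤ : ℕ∞) η → (∀ t, (t ≤ 0 ∨ T ≤ t) → η t = 0) →
      ∫ t in Ioc 0 T, w t * deriv η t = 0) :
    ∃ c, ∀ᵐ t ∂volume.restrict (Ioc 0 T), w t = c := by
  let B : ContDiffBump (T / 2) := ⟨T / 8, T / 4, by linarith, by linarith⟩
  set θ : ℝ → ℝ := B.normed volume with hθ
  have hθs : ContDiff ℝ (⊤ : ℕ∞) θ := B.contDiff_normed
  have hθsupp : ∀ t, t ∉ Ioo 0 T → θ t = 0 := by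
    intro t ht
    by_contra h0
    have : t ∈ support θ := h0
    rw [hθ, B.support_normed_eq, Real.ball_eq_Ioo] at this
    refine ht ⟨?_, ?_⟩
    · have := this.1; simp only [B] at this; linarith
    · have := this.2; simp only [B] at this; linarith
  have hθi : ∫ t in Ioc 0 T, θ t = 1 := by
    rw [setIntegral_eq_integral_of_forall_compl_eq_zero, hθ, B.integral_normed]
    intro t ht
    exact hθsupp t fun h' => ht ⟨h'.1, h'.2.le⟩
  refine ⟨∫ t in Ioc 0 T, w t * θ t, ?_⟩
  set c := ∫ t in Ioc 0 T, w t * θ t with hc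
  have hwmul : ∀ g : ℝ → ℝ, Continuous g → IntegrableOn (fun t => w t * g t) (Ioc 0 T) := by
    intro g hg
    have := (((intervalIntegrable_iff_integrableOn_Ioc_of_le hT.le).2 hw).mul_continuousOn
      hg.continuousOn)
    exact (intervalIntegrable_iff_integrableOn_Ioc_of_le hT.le).1 this
  -- it suffices that `w - c` annihilates every test function `g` supported in `(0,T)`
  have hz : ∀ᵐ t, t ∈ Ioo 0 T → w t - c = 0 := by
    refine isOpen_Ioo.ae_eq_zero_of_integral_contDiff_smul_eq_zero ?_ ?_
    · have h1 : IntegrableOn w (Ioo 0 T) := hw.mono_set Ioo_subset_Ioc_self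
      have h2 : IntegrableOn (fun _ : ℝ => c) (Ioo 0 T) :=
        integrableOn_const (by simp)
      exact (h1.sub h2).locallyIntegrableOn
    · intro g hg _ hgs
      have hg0 : ∀ t, t ∉ Ioo 0 T → g t = 0 := fun t ht => by
        by_contra h0
        exact ht (hgs (subset_tsupport _ h0))
      set I := ∫ t in Ioc 0 T, g t with hI
      -- a test function differs from a multiple of the fixed bump by an exact derivative
      set f : ℝ → ℝ := fun t => g t - I * θ t with hf
      have hfs : ContDiff ℝ (⊤ : ℕ∞) f := hg.sub (contDiff_const.mul hθs)
      have hfc := hfs.continuous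
      have hf0 : ∀ t, t ∉ Ioo 0 T → f t = 0 := fun t ht => by
        simp [hf, hg0 t ht, hθsupp t ht]
      set η : ℝ → ℝ := fun t => ∫ s in (0:ℝ)..t, f s with hη
      have hηd : ∀ t, HasDerivAt η (f t) t := fun t =>
        intervalIntegral.integral_hasDerivAt_right (hfc.intervalIntegrable _ _)
          hfc.stronglyMeasurable.stronglyMeasurableAtFilter hfc.continuousAt
      have hηd' : deriv η = f := funext fun t => (hηd t).deriv
      have hηs : ContDiff ℝ (⊤ : ℕ∞) η := by
        rw [contDiff_infty_iff_deriv]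
        exact ⟨fun t => (hηd t).differentiableAt, hηd' ▸ hfs⟩
      have hηT : η T = 0 := by
        simp only [hη, intervalIntegral.integral_of_le hT.le]
        simp only [hf]
        rw [integral_sub, integral_const_mul, hθi, ← hI]
        · ring
        · exact (hg.continuous.integrableOn_Icc).mono_set Ioc_subset_Icc_self
        · exact ((continuous_const.mul hθs.continuous).integrableOn_Icc).mono_set
            Ioc_subset_Icc_self
      have hη0 : ∀ t, (t ≤ 0 ∨ T ≤ t) → η t = 0 := by
        rintro t (ht | ht)
        · simp only [hη]
          rw [intervalIntegral.integral_symm, intervalIntegral.integral_of_le ht, neg_eq_zero]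
          refine setIntegral_eq_zero_of_forall_eq_zero fun s hs => hf0 s fun h' => ?_
          exact absurd h'.1 (not_lt.2 hs.2)
        · have : η t = η T + ∫ s in T..t, f s :=
            (intervalIntegral.integral_add_adjacent_intervals (hfc.intervalIntegrable _ _)
              (hfc.intervalIntegrable _ _)).symm
          rw [this, hηT, zero_add, intervalIntegral.integral_of_le ht]
          refine setIntegral_eq_zero_of_forall_eq_zero fun s hs => hf0 s fun h' => ?_
          exact absurd h'.2 (not_lt.2 hs.1.le)
      have hk := h η hηs hη0
      rw [hηd'] at hk
      have e1 : ∫ t in Ioc 0 T, w t * f t = (∫ t in Ioc 0 T, w t * g t) - I * c := by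
        rw [hc, ← integral_const_mul, ← integral_sub (hwmul g hg.continuous)
          ((hwmul θ hθs.continuous).const_mul I)]
        congr 1; ext t; simp only [hf]; ring
      rw [← setIntegral_eq_integral_of_forall_compl_eq_zero (s := Ioc 0 T)]
      · have e2 : ∫ t in Ioc 0 T, g t • (w t - c) = (∫ t in Ioc 0 T, w t * g t) - I * c := by
          rw [hI, ← integral_mul_const, ← integral_sub (hwmul g hg.continuous)
            (((hg.continuous.integrableOn_Icc).mono_set Ioc_subset_Icc_self).mul_const c)]
          congr 1; ext t; simp only [smul_eq_mul]; ring
        rw [e2, ← e1, hk]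
      · intro t ht
        rw [hg0 t fun h' => ht ⟨h'.1, h'.2.le⟩, zero_smul]
  rw [← restrict_Ioo_eq_restrict_Ioc, ae_restrict_iff' measurableSet_Ioo]
  filter_upwards [hz] with t ht hmem
  linarith [ht hmem]

/-- Chain rule in one variable: if `q` is the weak derivative of `u` on `(0,T)`, then
`β'(u) q` is the weak derivative of `β(u)`. By the Du Bois-Reymond lemma `u` agrees almost
everywhere with a constant plus the primitive of `q`, which is absolutely continuous. -/
lemma chain_one_dim {T : ℝ} (hT : 0 < T) {u q : ℝ → ℝ} (hu : IntegrableOn u (Ioc 0 T))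
    (hq : IntegrableOn q (Ioc 0 T))
    (h : ∀ η : ℝ → ℝ, ContDiff ℝ (⊤ : ℕ∞) η → (∀ t, (t ≤ 0 ∨ T ≤ t) → η t = 0) →
      ∫ t in Ioc 0 T, u t * deriv η t = - ∫ t in Ioc 0 T, q t * η t)
    {β : ℝ → ℝ} (hβ : ContDiff ℝ 1 β) {θ : ℝ → ℝ} (hθ : ContDiff ℝ 1 θ) (h0 : θ 0 = 0)
    (h1 : θ T = 0) :
    ∫ t in Ioc 0 T, β (u t) * deriv θ t = - ∫ t in Ioc 0 T, deriv β (u t) * q t * θ t := by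
  have hqi : IntervalIntegrable q volume 0 T :=
    (intervalIntegrable_iff_integrableOn_Ioc_of_le hT.le).2 hq
  set V : ℝ → ℝ := fun t => ∫ s in (0:ℝ)..t, q s with hV
  have hVi : IntegrableOn V (Ioc 0 T) := by
    have hac := hqi.absolutelyContinuousOnInterval_intervalIntegral (c := 0) (by simp)
    have : IntervalIntegrable V volume 0 T := hac.continuousOn.intervalIntegrable
    exact (intervalIntegrable_iff_integrableOn_Ioc_of_le hT.le).1 this
  obtain ⟨c, hc⟩ := du_bois_reymond hT (hu.sub hVi) (by
    intro η hη hη0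
    have hmul : ∀ w : ℝ → ℝ, IntegrableOn w (Ioc 0 T) →
        IntegrableOn (fun t => w t * deriv η t) (Ioc 0 T) := by
      intro w hw
      have := (((intervalIntegrable_iff_integrableOn_Ioc_of_le hT.le).2 hw).mul_continuousOn
        (hη.continuous_deriv (by simp)).continuousOn)
      exact (intervalIntegrable_iff_integrableOn_Ioc_of_le hT.le).1 this
    have e := primitive_chain hT hq 0 (β := id) contDiff_id (hη.of_le (by simp))
      (hη0 0 (Or.inl le_rfl)) (hη0 T (Or.inr le_rfl))
    simp only [id, zero_add, deriv_id, one_mul] at e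
    have hd : (fun t => deriv id (∫ s in (0:ℝ)..t, q s)) = fun _ => (1:ℝ) := by
      funext t; simp
    simp only [Pi.sub_apply, sub_mul]
    rw [integral_sub (hmul u hu) (hmul V hVi), h η hη hη0, e]
    simp)
  have hc' : ∀ᵐ t ∂volume.restrict (Ioc 0 T), u t = c + V t := by
    filter_upwards [hc] with t ht
    simp only [Pi.sub_apply] at ht
    linarith
  have e := primitive_chain hT hq c hβ hθ h0 h1
  calc ∫ t in Ioc 0 T, β (u t) * deriv θ t = ∫ t in Ioc 0 T, β (c + V t) * deriv θ t :=
        integral_congr_ae (by filter_upwards [hc'] with t ht; rw [ht])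
    _ = - ∫ t in Ioc 0 T, deriv β (c + V t) * q t * θ t := e
    _ = _ := by
        congr 1
        exact integral_congr_ae (by filter_upwards [hc'] with t ht; rw [ht])

end FP

/-! ### Mollification and weak divergences -/

namespace FP

lemma fderiv_eq_sum {n : ℕ} (f : Rn n → ℝ) (x v : Rn n) :
    fderiv ℝ f x v = ∑ i, v i * pd i f x := by
  have hv : v = ∑ i, v i • (EuclideanSpace.single i (1:ℝ) : Rn n) := by
    ext j
    simp [Finset.sum_apply, Pi.single_apply]
  conv_lhs => rw [hv]
  simp [map_sum, pd]

lemma inner_gradient_eq {n : ℕ} (f : Rn n → ℝ) (x v : Rn n) :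
    ⟪v, gradient f x⟫ = fderiv ℝ f x v := by
  rw [inner_gradient_right]; simp

lemma conv_eq {n : ℕ} (f g : Rn n → ℝ) :
    conv f g = convolution f g (ContinuousLinearMap.lsmul ℝ ℝ) volume := by
  funext x; rfl

lemma pd_continuous {n : ℕ} {f : Rn n → ℝ} (hf : ContDiff ℝ 1 f) (i : Fin n) :
    Continuous (pd i f) :=
  (hf.continuous_fderiv one_ne_zero).clm_apply continuous_const

lemma pd_smooth {n : ℕ} {f : Rn n → ℝ} (hf : ContDiff ℝ (⊤ : ℕ∞) f) (i : Fin n) :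
    ContDiff ℝ (⊤ : ℕ∞) (pd i f) :=
  (hf.fderiv_right (m := (⊤ : ℕ∞)) (by simp)).clm_apply contDiff_const

lemma pd_compact {n : ℕ} {f : Rn n → ℝ} (hf : HasCompactSupport f) (i : Fin n) :
    HasCompactSupport (pd i f) := hf.fderiv_apply (𝕜 := ℝ) _

lemma conv_hasFDerivAt {n : ℕ} {f g : Rn n → ℝ} (hf : LocallyIntegrable f) (hg : ContDiff ℝ 1 g)
    (hgc : HasCompactSupport g) (x : Rn n) : DifferentiableAt ℝ (conv f g) x ∧
    ∀ i, pd i (conv f g) x = conv f (pd i g) x := by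
  have h := hgc.hasFDerivAt_convolution_right (ContinuousLinearMap.lsmul ℝ ℝ) hf hg x
  rw [conv_eq]
  refine ⟨h.differentiableAt, fun i => ?_⟩
  rw [pd, h.fderiv, convolution_precompR_apply _ hf (hgc.fderiv ℝ)
    (hg.continuous_fderiv one_ne_zero), conv_eq]
  rfl

lemma conv_smooth {n : ℕ} {f g : Rn n → ℝ} (hf : LocallyIntegrable f)
    (hg : ContDiff ℝ (⊤ : ℕ∞) g) (hgc : HasCompactSupport g) :
    ContDiff ℝ (⊤ : ℕ∞) (conv f g) := by
  rw [conv_eq]; exact hgc.contDiff_convolution_right _ hf hg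

/-- A shrinking sequence of bump functions at the origin. -/
def bump (n : ℕ) (k : ℕ) : ContDiffBump (0 : Rn n) :=
  ⟨1 / (k + 2 : ℝ), 1 / (k + 1 : ℝ), by positivity, by
    apply one_div_lt_one_div_of_lt <;> [positivity; linarith]⟩

lemma bump_rOut_le (n k : ℕ) : (bump n k).rOut ≤ 1 := by
  change 1 / (k + 1 : ℝ) ≤ 1
  rw [div_le_one (by positivity)]
  linarith [Nat.cast_nonneg (α := ℝ) k]

lemma bump_tendsto (n : ℕ) : Tendsto (fun k => (bump n k).rOut) atTop (𝓝 0) :=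
  tendsto_one_div_add_atTop_nhds_zero_nat

lemma LI_mul {n : ℕ} {f g : Rn n → ℝ} (hf : LocallyIntegrable f) (hg : Continuous g)
    (hgc : HasCompactSupport g) : Integrable (fun x => f x * g x) :=
  hf.integrable_smul_right_of_hasCompactSupport hg hgc

/-- Mollifying a continuous compactly supported function does not change, in the limit, its
pairing with a locally integrable function. -/
lemma tendsto_pairing {n : ℕ} {f g : Rn n → ℝ} (hf : LocallyIntegrable f) (hg : Continuous g)
    (hgc : HasCompactSupport g) :
    Tendsto (fun k => ∫ x, f x * conv ((bump n k).normed volume) g x) atTop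
      (𝓝 (∫ x, f x * g x)) := by
  obtain ⟨C, hC⟩ := hgc.exists_bound_of_continuous hg
  obtain ⟨R, hR⟩ := hgc.isCompact.isBounded.subset_ball (0 : Rn n)
  have hg0 : ∀ x, x ∉ ball (0 : Rn n) R → g x = 0 := fun x hx => by
    by_contra h; exact hx (hR (subset_tsupport _ h))
  refine tendsto_integral_of_dominated_convergence
    (fun x => (closedBall (0 : Rn n) (R + 1)).indicator (fun x => ‖f x‖ * (3 * C)) x) ?_ ?_ ?_ ?_
  · intro k
    refine hf.aestronglyMeasurable.mul (Continuous.aestronglyMeasurable ?_)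
    rw [conv_eq]
    exact hgc.continuous_convolution_right _
      ((bump n k).continuous_normed.locallyIntegrable) hg
  · rw [integrable_indicator_iff measurableSet_closedBall]
    exact ((hf.integrableOn_isCompact (isCompact_closedBall _ _)).norm).mul_const _
  · intro k
    refine Eventually.of_forall fun x => ?_
    -- the mollified function is bounded by `3C`, and it vanishes outside the ball of radius `R + 1`
    have hd := (bump n k).dist_normed_convolution_le (μ := volume) (x₀ := x) (g := g) (ε := 2 * C)
      hg.aestronglyMeasurable (fun y _ => by
        rw [dist_eq_norm]
        exact (norm_sub_le _ _).trans (by linarith [hC x, hC y]))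
    by_cases hx : x ∈ closedBall (0 : Rn n) (R + 1)
    · rw [indicator_of_mem hx, norm_mul]
      refine mul_le_mul_of_nonneg_left ?_ (norm_nonneg _)
      rw [conv_eq]
      rw [dist_eq_norm] at hd
      have := norm_le_norm_add_norm_sub (g x)
        (convolution ((bump n k).normed volume) g (ContinuousLinearMap.lsmul ℝ ℝ) volume x)
      rw [norm_sub_rev] at this
      linarith [hC x]
    · rw [indicator_of_notMem hx]
      have hgx : g x = 0 := hg0 x fun h => hx (by
        simp only [mem_closedBall, mem_ball] at h ⊢; linarith)
      have := (bump n k).normed_convolution_eq_right (μ := volume) (x₀ := x) (g := g) (by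
        intro y hy
        rw [hgx]
        refine hg0 y fun h => hx ?_
        simp only [mem_closedBall, mem_ball, dist_zero_right] at h hy ⊢
        have h1 := bump_rOut_le n k
        have h2 : ‖x‖ ≤ ‖y‖ + dist y x := by
          rw [dist_eq_norm, norm_sub_rev]
          simpa using norm_add_le y (x - y)
        linarith)
      rw [conv_eq, this, hgx, mul_zero, norm_zero]
  · refine Eventually.of_forall fun x => ?_
    simp only [conv_eq]
    exact (ContDiffBump.convolution_tendsto_right_of_continuous (bump_tendsto n) hg x).const_mul _

/-- A weak divergence may be tested against compactly supported functions that are only `C¹`. -/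
lemma weakDiv_C1 {n : ℕ} {c : Rn n → Rn n} {d : Rn n → ℝ}
    (hc : ∀ i, LocallyIntegrable (fun x => c x i)) (hd : LocallyIntegrable d)
    (h : HasWeakDiv c d) {ψ : Rn n → ℝ} (hψ : ContDiff ℝ 1 ψ) (hψc : HasCompactSupport ψ) :
    Integrable (fun x => fderiv ℝ ψ x (c x) + d x * ψ x) ∧
      ∫ x, (fderiv ℝ ψ x (c x) + d x * ψ x) = 0 := by
  have i1 : ∀ i, Integrable (fun x => c x i * pd i ψ x) := fun i =>
    LI_mul (hc i) (pd_continuous hψ i) (pd_compact hψc i)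
  have i2 : Integrable (fun x => d x * ψ x) := LI_mul hd hψ.continuous hψc
  have i3 : Integrable (fun x => fderiv ℝ ψ x (c x)) := by
    simp only [fderiv_eq_sum]
    exact integrable_finsetSum _ fun i _ => i1 i
  refine ⟨i3.add i2, ?_⟩
  rw [integral_add i3 i2]
  simp only [fderiv_eq_sum]
  rw [integral_finsetSum _ fun i _ => i1 i]
  have lim1 := (tendsto_finsetSum Finset.univ fun i (_ : i ∈ Finset.univ) =>
    tendsto_pairing (hc i) (pd_continuous hψ i) (pd_compact hψc i)).add
    (tendsto_pairing hd hψ.continuous hψc)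
  refine tendsto_nhds_unique lim1 (tendsto_const_nhds.congr fun k => ?_)
  -- the mollification of `ψ` is an admissible test function, and its derivatives are the
  -- mollifications of those of `ψ`
  set B := (bump n k).normed volume
  have hB : ContDiff ℝ (⊤ : ℕ∞) B := (bump n k).contDiff_normed
  have hBc : HasCompactSupport B := (bump n k).hasCompactSupport_normed
  have hBl : LocallyIntegrable B := hB.continuous.locallyIntegrable
  have hs : TestS (conv B ψ) := by
    constructor
    · rw [conv_eq]; exact hBc.contDiff_convolution_left _ hB hψ.continuous.locallyIntegrable
    · rw [conv_eq]; exact hBc.convolution _ hψc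
  have e := h _ hs
  simp only [inner_gradient_eq, fderiv_eq_sum, (conv_hasFDerivAt hBl hψ hψc _).2] at e
  rw [integral_finsetSum] at e
  · rw [e]; ring
  · intro i _
    refine LI_mul (hc i) ?_ ?_
    · rw [conv_eq]
      exact (pd_compact hψc i).continuous_convolution_right _ hBl (pd_continuous hψ i)
    · rw [conv_eq]; exact hBc.convolution _ (pd_compact hψc i)

lemma HasWeakDiv.of_pd {n : ℕ} {c : Rn n → Rn n} {D : Rn n → Fin n → Fin n → ℝ}
    (hc : ∀ i, LocallyIntegrable (fun x => c x i))
    (hD : ∀ i j, LocallyIntegrable (fun x => D x i j))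
    (h : ∀ i j, HasWeakPd j (fun x => c x i) (fun x => D x i j)) :
    HasWeakDiv c (fun x => ∑ i, D x i i) := by
  intro ψ hψ
  simp only [inner_gradient_eq, fderiv_eq_sum, Finset.sum_mul]
  rw [integral_finsetSum _ fun i _ => LI_mul (hc i)
      (pd_continuous (hψ.1.of_le (by simp)) i) (pd_compact hψ.2 i),
    integral_finsetSum _ fun i _ => LI_mul (hD i i) hψ.1.continuous hψ.2,
    ← Finset.sum_neg_distrib]
  exact Finset.sum_congr rfl fun i _ => h i i ψ hψ

end FP

/-! ### The chain rule at a fixed time -/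

namespace FP

variable {n m : ℕ}

/-- The density of the distribution `∂_t p_ε`, as read off from the weak formulation tested with
the kernel: `q = -∂_iρ_ε ∗ (p b_i) + ½ ∂_iρ_ε ∗ (G_k σ_{ik})`. -/
def qE (r : Rn n → ℝ) (b : Rn n → Rn n) (σ : Rn n → Fin m → Rn n) (p : Rn n → ℝ)
    (G : Rn n → Fin m → ℝ) (x : Rn n) : ℝ :=
  - (∑ i, conv (fun y => p y * b y i) (pd i r) x)
    + (1/2) * ∑ k, ∑ i, conv (fun y => G y k * σ y k i) (pd i r) x

lemma reflect_smooth {r : Rn n → ℝ} (hr : ContDiff ℝ (⊤ : ℕ∞) r) (x : Rn n) :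
    ContDiff ℝ (⊤ : ℕ∞) (fun y => r (x - y)) :=
  hr.comp (contDiff_const.sub contDiff_id)

lemma reflect_compact {r : Rn n → ℝ} (hr : HasCompactSupport r) (x : Rn n) :
    HasCompactSupport (fun y => r (x - y)) :=
  hr.comp_homeomorph (Homeomorph.subLeft x)

lemma reflect_pd {r : Rn n → ℝ} (hr : ContDiff ℝ (⊤ : ℕ∞) r) (x : Rn n) (i : Fin n) (y : Rn n) :
    pd i (fun y => r (x - y)) y = - pd i r (x - y) := by
  have h := ((hr.differentiable (by simp) (x - y)).hasFDerivAt).comp y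
    ((hasFDerivAt_id y).const_sub x)
  rw [pd, show fderiv ℝ (fun y => r (x - y)) y = _ from h.fderiv]
  simp [pd]

/-- If `G = c·∇p` in the distributional sense, the mollification of the distribution `c·∇p` is
`ρ_ε ∗ G`. Applied to the columns of `σ`, it gives `R_{k,ε} = ρ_ε ∗ G_k - σ_{jk}∂_j p_ε`. -/
lemma convDer_eq {r : Rn n → ℝ} (hr : ContDiff ℝ (⊤ : ℕ∞) r) (hrc : HasCompactSupport r)
    {c : Rn n → Rn n} {d p G : Rn n → ℝ}
    (hpc : ∀ i, LocallyIntegrable (fun x => p x * c x i))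
    (hpd : LocallyIntegrable (fun x => p x * d x))
    (hG : ∀ ψ : Rn n → ℝ, TestS ψ →
      ∫ x, G x * ψ x = - ∫ x, p x * (⟪c x, gradient ψ x⟫ + d x * ψ x)) (x : Rn n) :
    convDer r c d p x = conv G r x := by
  have h := hG _ ⟨reflect_smooth hr x, reflect_compact hrc x⟩
  have hi : ∀ i, Integrable (fun y => p y * c y i * pd i r (x - y)) := fun i =>
    LI_mul (hpc i) (reflect_smooth (pd_smooth hr i) x).continuous
      (reflect_compact (pd_compact hrc i) x)
  have hd : Integrable (fun y => p y * d y * r (x - y)) :=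
    LI_mul hpd (reflect_smooth hr x).continuous (reflect_compact hrc x)
  rw [conv, h, convDer]
  simp only [inner_gradient_eq, fderiv_eq_sum, reflect_pd hr, conv]
  rw [← integral_finsetSum _ fun i _ => hi i, ← integral_sub (integrable_finsetSum _ fun i _ => hi i) hd,
    ← integral_neg]
  congr 1
  funext y
  rw [mul_add, Finset.mul_sum, neg_add, ← Finset.sum_neg_distrib, sub_eq_add_neg]
  congr 1
  · exact Finset.sum_congr rfl fun i _ => by ring
  · ring

/-- The pointwise algebra behind `spatial_identity`. The letters stand for the values at one point
`x` of the following quantities: `βi` for `β⁽ⁱ⁾(p_ε)`, `u` for `p_ε`, `h` for the time derivative of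
the test function, `bφ`, `bu` for `b·∇φ`, `b·∇p_ε`, `cb` for `∂_iρ_ε ∗ (p b_i)`, `cpd` for
`ρ_ε ∗ (p d)`; and, for each column `σ_k`, `A`, `s`, `dg` for `σ_k·∇φ`, `σ_k·∇p_ε`, `σ_k·∇g_k`,
`g` for `ρ_ε ∗ G_k`, `D` for `div σ_k`, `c1` for `ρ_ε ∗ (G_k div σ_k)` and `c2` for
`∂_iρ_ε ∗ (G_k σ_{ik})`. -/
lemma scalar_identity (β0 β1 β2 h φ u d bφ bu cb cpd : ℝ) (A s g D c1 c2 dg : Fin m → ℝ) :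
    - β0 * h - β0 * bφ + (1/2) * β1 * ∑ k, A k * s k - (β0 - u * β1) * d * φ
      + (1/2) * β2 * (∑ k, s k ^ 2) * φ
    = β1 * ((-(cpd - d * u) + (1/2) * (∑ k, (c1 k - D k * g k) + ∑ k, (c2 k - c1 k - dg k)))
        - (cb - cpd - bu)) * φ
      - (1/2) * ∑ k, (g k - s k) * (β1 * A k + φ * β2 * s k)
      + (- β0 * h - β1 * (- cb + (1/2) * ∑ k, c2 k) * φ)
      + (-(β1 * φ * bu + β0 * bφ + d * (β0 * φ))
        + (1/2) * ∑ k, (β1 * φ * dg k + g k * β2 * φ * s k + g k * β1 * A k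
          + D k * (g k * (β1 * φ)))) := by
  have key : ∀ S : Finset (Fin m),
      (1/2) * β1 * ∑ k ∈ S, A k * s k + (1/2) * β2 * (∑ k ∈ S, s k ^ 2) * φ
      = β1 * ((1/2) * (∑ k ∈ S, (c1 k - D k * g k) + ∑ k ∈ S, (c2 k - c1 k - dg k))) * φ
        - (1/2) * ∑ k ∈ S, (g k - s k) * (β1 * A k + φ * β2 * s k)
        - β1 * ((1/2) * ∑ k ∈ S, c2 k) * φ
        + (1/2) * ∑ k ∈ S, (β1 * φ * dg k + g k * β2 * φ * s k + g k * β1 * A k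
          + D k * (g k * (β1 * φ))) := by
    intro S
    induction S using Finset.induction_on with
    | empty => simp
    | insert a S ha ih =>
      simp only [Finset.sum_insert ha]
      linear_combination ih
  linear_combination key Finset.univ

/-- At a fixed time, the two sides of the chain rule differ by the time-derivative contribution
and by a function `E` of zero integral, a combination of exact divergences tested against
`β(p_ε) φ` and `(ρ_ε ∗ G_k) β'(p_ε) φ`. -/
lemma spatial_identity {r : Rn n → ℝ} (hr : ContDiff ℝ (⊤ : ℕ∞) r) (hrc : HasCompactSupport r)
    {b : Rn n → Rn n} {d p : Rn n → ℝ} {σ : Rn n → Fin m → Rn n} {dσ G : Rn n → Fin m → ℝ}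
    (hb : ∀ i, LocallyIntegrable (fun x => b x i)) (hd : LocallyIntegrable d)
    (hdiv : HasWeakDiv b d)
    (hσ : ∀ k i, LocallyIntegrable (fun x => σ x k i))
    (hdσ : ∀ k, LocallyIntegrable (fun x => dσ x k))
    (hσdiv : ∀ k, HasWeakDiv (fun x => σ x k) (fun x => dσ x k))
    (hp : LocallyIntegrable p)
    (hpσ : ∀ k i, LocallyIntegrable (fun x => p x * σ x k i))
    (hpdσ : ∀ k, LocallyIntegrable (fun x => p x * dσ x k))
    (hGl : ∀ k, LocallyIntegrable (fun x => G x k))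
    (hG : ∀ (k : Fin m) (ψ : Rn n → ℝ), TestS ψ →
      ∫ x, G x k * ψ x = - ∫ x, p x * (⟪σ x k, gradient ψ x⟫ + dσ x k * ψ x))
    {β : ℝ → ℝ} (hβ : ContDiff ℝ 2 β) {φ : Rn n → ℝ} (hφ : TestS φ) (h : Rn n → ℝ) :
    ∃ E : Rn n → ℝ, Integrable E ∧ ∫ x, E x = 0 ∧ ∀ x,
      (- β (conv p r x) * h x
          - β (conv p r x) * ⟪b x, gradient φ x⟫
          + (1/2) * deriv β (conv p r x)
              * ∑ k, ⟪σ x k, gradient φ x⟫ * sgradE r σ p k x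
          - (β (conv p r x) - conv p r x * deriv β (conv p r x)) * d x * φ x
          + (1/2) * deriv (deriv β) (conv p r x)
              * (∑ k, (sgradE r σ p k x) ^ 2) * φ x)
      = (deriv β (conv p r x)
              * (Uterm r d σ dσ p G x - commDer r b d p x) * φ x
            - (1/2) * ∑ k, Rterm r σ dσ p k x
                * (deriv β (conv p r x) * ⟪σ x k, gradient φ x⟫
                    + φ x * deriv (deriv β) (conv p r x) * sgradE r σ p k x))
        + (- β (conv p r x) * h x - deriv β (conv p r x) * qE r b σ p G x * φ x) + E x := by
  have hr1 : ContDiff ℝ 1 r := hr.of_le (by simp)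
  have hβ' : ContDiff ℝ 1 (deriv β) := by
    have := (contDiff_succ_iff_deriv (n := 1) (f := β)).1 (by simpa [one_add_one_eq_two] using hβ)
    exact this.2.2
  set u := conv p r with hu
  have hus : ContDiff ℝ 1 u := (conv_smooth hp hr hrc).of_le (by simp)
  set g : Fin m → Rn n → ℝ := fun k => conv (fun x => G x k) r with hg
  have hgs : ∀ k, ContDiff ℝ 1 (g k) := fun k => (conv_smooth (hGl k) hr hrc).of_le (by simp)
  have hφ1 : ContDiff ℝ 1 φ := hφ.1.of_le (by simp)
  set ψ0 : Rn n → ℝ := fun x => β (u x) * φ x with hψ0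
  set ψ : Fin m → Rn n → ℝ := fun k x => g k x * (deriv β (u x) * φ x) with hψ
  have h0 := weakDiv_C1 hb hd hdiv (ψ := ψ0) (((hβ.of_le (by norm_num)).comp hus).mul hφ1)
    hφ.2.mul_left
  have hk := fun k => weakDiv_C1 (hσ k) (hdσ k) (hσdiv k) (ψ := ψ k)
    ((hgs k).mul ((hβ'.comp hus).mul hφ1)) (hφ.2.mul_left.mul_left)
  refine ⟨fun x => -(fderiv ℝ ψ0 x (b x) + d x * ψ0 x)
      + (1/2) * ∑ k, (fderiv ℝ (ψ k) x (σ x k) + dσ x k * ψ k x), ?_, ?_, ?_⟩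
  · exact h0.1.neg.add ((integrable_finsetSum _ fun k _ => (hk k).1).const_mul _)
  · have hi := (integrable_finsetSum Finset.univ fun k _ => (hk k).1).const_mul (1/2 : ℝ)
    have h0n : Integrable (fun x => -(fderiv ℝ ψ0 x (b x) + d x * ψ0 x)) := h0.1.neg
    beta_reduce
    rw [integral_add h0n hi, integral_neg, h0.2, integral_const_mul, integral_finsetSum _ fun k _ => (hk k).1]
    simp [(hk _).2]
  · intro x
    have du := (hus.differentiable one_ne_zero x).hasFDerivAt
    have dφ := (hφ1.differentiable one_ne_zero x).hasFDerivAt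
    have dβ := (hβ.differentiable (by norm_num) (u x)).hasDerivAt
    have dβ' := (hβ'.differentiable one_ne_zero (u x)).hasDerivAt
    have e0 : ∀ v, fderiv ℝ ψ0 x v
        = deriv β (u x) * φ x * fderiv ℝ u x v + β (u x) * fderiv ℝ φ x v := by
      intro v
      have := (dβ.comp_hasFDerivAt x du).mul dφ
      rw [show fderiv ℝ ψ0 x = _ from this.fderiv]
      simp; ring
    have e1 : ∀ k v, fderiv ℝ (ψ k) x v
        = deriv β (u x) * φ x * fderiv ℝ (g k) x v
          + g k x * deriv (deriv β) (u x) * φ x * fderiv ℝ u x v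
          + g k x * deriv β (u x) * fderiv ℝ φ x v := by
      intro k v
      have := (((hgs k).differentiable one_ne_zero x).hasFDerivAt).mul
        ((dβ'.comp_hasFDerivAt x du).mul dφ)
      rw [show fderiv ℝ (ψ k) x = _ from this.fderiv]
      simp; ring
    have eu : ∀ v, ∑ i, v i * conv p (pd i r) x = fderiv ℝ u x v := by
      intro v
      rw [fderiv_eq_sum]
      simp only [hu, (conv_hasFDerivAt hp hr1 hrc x).2]
    have eg : ∀ k v, ∑ i, v i * conv (fun y => G y k) (pd i r) x = fderiv ℝ (g k) x v := by
      intro k v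
      rw [fderiv_eq_sum]
      simp only [hg, (conv_hasFDerivAt (hGl k) hr1 hrc x).2]
    have hR : ∀ k, Rterm r σ dσ p k x = g k x - fderiv ℝ u x (σ x k) := by
      intro k
      rw [Rterm, commDer, convDer_eq hr hrc (hpσ k) (hpdσ k) (hG k), eu]
    have hs : ∀ k, sgradE r σ p k x = fderiv ℝ u x (σ x k) := fun k => eu _
    have hS : Sterm r dσ G x
        = ∑ k, (conv (fun y => G y k * dσ y k) r x - dσ x k * g k x) := by
      rw [Sterm]
      refine Finset.sum_congr rfl fun k _ => ?_
      rw [commMul]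
      simp only [mul_comm (dσ _ k), hg]
    have hT : Tterm r σ dσ G x
        = ∑ k, ((∑ i, conv (fun y => G y k * σ y k i) (pd i r) x)
          - conv (fun y => G y k * dσ y k) r x - fderiv ℝ (g k) x (σ x k)) := by
      rw [Tterm]
      refine Finset.sum_congr rfl fun k _ => ?_
      rw [commDer, convDer, eg]
    have hQ1 : commMul r d p x = conv (fun y => p y * d y) r x - d x * u x := by
      rw [commMul]
      simp only [mul_comm (d _), hu]
    have hQ2 : commDer r b d p x = (∑ i, conv (fun y => p y * b y i) (pd i r) x)
        - conv (fun y => p y * d y) r x - fderiv ℝ u x (b x) := by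
      rw [commDer, convDer, eu]
    simp only [hR, hs, Uterm, hS, hT, hQ1, hQ2, inner_gradient_eq, e0, e1, qE]
    exact scalar_identity (m := m) _ _ _ _ _ _ _ _ _ _ _ (fun k => fderiv ℝ φ x (σ x k)) _
      (fun k => g k x) (fun k => dσ x k) (fun k => conv (fun y => G y k * dσ y k) r x) _
      (fun k => fderiv ℝ (g k) x (σ x k))

end FP

/-! ### Local integrability in space-time -/

namespace FP

variable {n m : ℕ}

/-- `H ≥ 0` has finite integral over `(0,T] × B(R)` for every `R > 0`. -/
structure FinH (T : ℝ) (H : ℝ → Rn n → ℝ≥0∞) : Prop where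
  meas : Measurable (uncurry H)
  fin : ∀ R : ℝ, 0 < R → (∫⁻ t in Ioc (0:ℝ) T, ∫⁻ x in ball (0 : Rn n) R, H t x) < ⊤

/-- `F ∈ L¹([0,T], L¹_loc(ℝⁿ))`. -/
structure LL1 (T : ℝ) (F : ℝ → Rn n → ℝ) : Prop where
  meas : Measurable (uncurry F)
  fin : ∀ R : ℝ, 0 < R → (∫⁻ t in Ioc (0:ℝ) T, ∫⁻ x in ball (0 : Rn n) R, ‖F t x‖ₑ) < ⊤

lemma FinH.meas_int {T : ℝ} {H : ℝ → Rn n → ℝ≥0∞} (h : FinH T H) (R : ℝ) :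
    Measurable (fun t => ∫⁻ x in ball (0 : Rn n) R, H t x) :=
  h.meas.lintegral_prod_right'

lemma FinH.add {T : ℝ} {H K : ℝ → Rn n → ℝ≥0∞} (h : FinH T H) (k : FinH T K) :
    FinH T (fun t x => H t x + K t x) := by
  refine ⟨h.meas.add k.meas, fun R hR => ?_⟩
  have e : ∀ t, ∫⁻ x in ball (0 : Rn n) R, (H t x + K t x)
      = (∫⁻ x in ball (0 : Rn n) R, H t x) + ∫⁻ x in ball (0 : Rn n) R, K t x := fun t =>
    lintegral_add_left (h.meas.comp measurable_prodMk_left) _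
  simp only [e]
  rw [lintegral_add_left (h.meas_int R)]
  exact ENNReal.add_lt_top.2 ⟨h.fin R hR, k.fin R hR⟩

lemma FinH.const (T : ℝ) {C : ℝ≥0∞} (hC : C < ⊤) : FinH T (fun _ (_ : Rn n) => C) := by
  refine ⟨measurable_const, fun R _ => ?_⟩
  simp only [lintegral_const, Measure.restrict_apply MeasurableSet.univ, univ_inter]
  exact ENNReal.mul_lt_top (ENNReal.mul_lt_top hC measure_ball_lt_top) measure_Ioc_lt_top

lemma FinH.const_mul {T : ℝ} {H : ℝ → Rn n → ℝ≥0∞} (h : FinH T H) {C : ℝ≥0∞} (hC : C < ⊤) :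
    FinH T (fun t x => C * H t x) := by
  refine ⟨h.meas.const_mul C, fun R hR => ?_⟩
  simp only [lintegral_const_mul' C _ hC.ne]
  exact ENNReal.mul_lt_top hC (h.fin R hR)

lemma FinH.zero (T : ℝ) : FinH T (fun _ (_ : Rn n) => 0) := FinH.const T (by simp)

lemma FinH.sum {T : ℝ} {ι : Type*} (s : Finset ι) {H : ι → ℝ → Rn n → ℝ≥0∞}
    (h : ∀ i, FinH T (H i)) : FinH T (fun t x => ∑ i ∈ s, H i t x) := by
  classical
  induction s using Finset.induction_on with
  | empty => simpa using FinH.zero T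
  | insert a s ha ih => simpa only [Finset.sum_insert ha] using (h a).add ih

lemma LL1.toFinH {T : ℝ} {F : ℝ → Rn n → ℝ} (h : LL1 T F) : FinH T (fun t x => ‖F t x‖ₑ) :=
  ⟨h.meas.enorm, h.fin⟩

/-- The almost-everywhere form of the domination is needed for products with `p`, which is only
essentially bounded. -/
lemma LL1.of_le {T : ℝ} {F : ℝ → Rn n → ℝ} (hF : Measurable (uncurry F))
    {H : ℝ → Rn n → ℝ≥0∞} (h : FinH T H)
    (hle : ∀ᵐ t ∂volume.restrict (Ioc (0:ℝ) T), ∀ᵐ x, ‖F t x‖ₑ ≤ H t x) : LL1 T F := by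
  refine ⟨hF, fun R hR => lt_of_le_of_lt (lintegral_mono_ae ?_) (h.fin R hR)⟩
  filter_upwards [hle] with t ht
  exact lintegral_mono_ae (ae_restrict_of_ae ht)

lemma LL1.of_le' {T : ℝ} {F : ℝ → Rn n → ℝ} (hF : Measurable (uncurry F))
    {H : ℝ → Rn n → ℝ≥0∞} (h : FinH T H) (hle : ∀ t x, ‖F t x‖ₑ ≤ H t x) : LL1 T F :=
  LL1.of_le hF h (Eventually.of_forall fun t => Eventually.of_forall fun x => hle t x)

lemma LL1.add {T : ℝ} {F K : ℝ → Rn n → ℝ} (h : LL1 T F) (k : LL1 T K) :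
    LL1 T (fun t x => F t x + K t x) :=
  LL1.of_le' (h.meas.add k.meas) (h.toFinH.add k.toFinH) fun _ _ => enorm_add_le _ _

lemma LL1.const_mul {T : ℝ} {F : ℝ → Rn n → ℝ} (h : LL1 T F) (c : ℝ) :
    LL1 T (fun t x => c * F t x) :=
  LL1.of_le' (h.meas.const_mul c) (h.toFinH.const_mul (C := ‖c‖ₑ) enorm_lt_top)
    fun _ _ => (enorm_mul _ _).le

lemma LL1.neg {T : ℝ} {F : ℝ → Rn n → ℝ} (h : LL1 T F) : LL1 T (fun t x => - F t x) :=
  LL1.of_le' h.meas.neg h.toFinH fun _ _ => (enorm_neg _).le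

lemma LL1.sum {T : ℝ} {ι : Type*} (s : Finset ι) {F : ι → ℝ → Rn n → ℝ}
    (h : ∀ i, LL1 T (F i)) : LL1 T (fun t x => ∑ i ∈ s, F i t x) := by
  refine LL1.of_le' ?_ (FinH.sum s fun i => (h i).toFinH) fun _ _ => enorm_sum_le _ _
  exact Finset.measurable_fun_sum s fun i _ => (h i).meas

/-- `|p(t,·)| ≤ C` almost everywhere, for almost every `t ∈ (0,T]`. -/
def AeBdd (T C : ℝ) (p : ℝ → Rn n → ℝ) : Prop :=
  ∀ᵐ t ∂volume.restrict (Ioc (0:ℝ) T), ∀ᵐ x, ‖p t x‖ ≤ C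

lemma LL1.bdd_mul {T C : ℝ} {p F : ℝ → Rn n → ℝ} (hp : Measurable (uncurry p))
    (hb : AeBdd T C p) (h : LL1 T F) : LL1 T (fun t x => p t x * F t x) := by
  refine LL1.of_le (hp.mul h.meas) (h.toFinH.const_mul (C := ENNReal.ofReal C) (by simp)) ?_
  filter_upwards [hb] with t ht
  filter_upwards [ht] with x hx
  rw [enorm_mul]
  gcongr
  rw [← ofReal_norm]
  exact ENNReal.ofReal_le_ofReal hx

lemma LL1.ae_LI {T : ℝ} {F : ℝ → Rn n → ℝ} (h : LL1 T F) :
    ∀ᵐ t ∂volume.restrict (Ioc (0:ℝ) T), LocallyIntegrable (F t) := by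
  have h1 : ∀ᵐ t ∂volume.restrict (Ioc (0:ℝ) T), ∀ k : ℕ,
      ∫⁻ x in ball (0 : Rn n) (k + 1), ‖F t x‖ₑ < ⊤ :=
    ae_all_iff.2 fun k => ae_lt_top (h.toFinH.meas_int _) (h.fin _ (by positivity)).ne
  filter_upwards [h1] with t ht x
  obtain ⟨k, hk⟩ := exists_nat_gt ‖x‖
  refine ⟨ball 0 (k + 1), isOpen_ball.mem_nhds (by simp; linarith), ?_, ht k⟩
  exact (h.meas.comp measurable_prodMk_left).aestronglyMeasurable

/-- On `B(R)`, convolution with a kernel supported in `B(S)` only sees `f` on `B(R + S)`. -/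
lemma enorm_conv_le {f r : Rn n → ℝ} {K S R : ℝ} (hK : ∀ x, ‖r x‖ ≤ K)
    (hS : ∀ x, x ∉ ball (0 : Rn n) S → r x = 0) {x : Rn n} (hx : x ∈ ball (0 : Rn n) R) :
    ‖conv f r x‖ₑ ≤ ENNReal.ofReal K * ∫⁻ y in ball (0 : Rn n) (R + S), ‖f y‖ₑ := by
  rw [← lintegral_const_mul' _ _ ENNReal.ofReal_ne_top, ← lintegral_indicator measurableSet_ball]
  refine (enorm_integral_le_lintegral_enorm _).trans (lintegral_mono fun y => ?_)
  by_cases hy : y ∈ ball (0 : Rn n) (R + S)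
  · rw [indicator_of_mem hy, enorm_mul, mul_comm]
    gcongr
    rw [← ofReal_norm]
    exact ENNReal.ofReal_le_ofReal (hK _)
  · rw [indicator_of_notMem hy, hS]
    · simp
    · intro h
      apply hy
      simp only [mem_ball, dist_zero_right] at *
      have : ‖y‖ ≤ ‖x‖ + ‖x - y‖ := by
        simpa using norm_sub_le x (x - y)
      linarith

/-- Bounds for a continuous compactly supported kernel. -/
lemma kernel_bounds {r : Rn n → ℝ} (hr : Continuous r) (hrc : HasCompactSupport r) :
    ∃ K S : ℝ, 0 < S ∧ (∀ x, ‖r x‖ ≤ K) ∧ ∀ x, x ∉ ball (0 : Rn n) S → r x = 0 := by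
  obtain ⟨K, hK⟩ := hrc.exists_bound_of_continuous hr
  obtain ⟨S, hS⟩ := hrc.isCompact.isBounded.subset_ball (0 : Rn n)
  refine ⟨K, max S 1, by positivity, hK, fun x hx => ?_⟩
  by_contra h
  exact hx (ball_subset_ball (le_max_left _ _) (hS (subset_tsupport _ h)))

lemma conv_meas {F : ℝ → Rn n → ℝ} (hF : Measurable (uncurry F)) {r : Rn n → ℝ}
    (hr : Continuous r) : Measurable (uncurry fun t x => conv (F t) r x) := by
  have : StronglyMeasurable (fun z : (ℝ × Rn n) × Rn n => F z.1.1 z.2 * r (z.1.2 - z.2)) := by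
    refine Measurable.stronglyMeasurable (Measurable.mul ?_ ?_)
    · exact hF.comp ((measurable_fst.comp measurable_fst).prodMk measurable_snd)
    · exact hr.measurable.comp ((measurable_snd.comp measurable_fst).sub measurable_snd)
  exact this.integral_prod_right'.measurable

lemma LL1.conv {T : ℝ} {F : ℝ → Rn n → ℝ} (h : LL1 T F) {r : Rn n → ℝ} (hr : Continuous r)
    (hrc : HasCompactSupport r) : LL1 T (fun t x => FP.conv (F t) r x) := by
  obtain ⟨K, S, hS0, hK, hS⟩ := kernel_bounds hr hrc
  refine ⟨conv_meas h.meas hr, fun R hR => ?_⟩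
  calc (∫⁻ t in Ioc (0:ℝ) T, ∫⁻ x in ball (0 : Rn n) R, ‖FP.conv (F t) r x‖ₑ)
      ≤ ∫⁻ t in Ioc (0:ℝ) T, (ENNReal.ofReal K * volume (ball (0 : Rn n) R))
          * ∫⁻ y in ball (0 : Rn n) (R + S), ‖F t y‖ₑ := by
        refine lintegral_mono fun t => ?_
        refine (setLIntegral_mono' measurableSet_ball
          (fun x hx => enorm_conv_le (f := F t) hK hS hx)).trans ?_
        rw [setLIntegral_const]
        exact le_of_eq (by ring)
    _ < ⊤ := by
        have hc : ENNReal.ofReal K * volume (ball (0 : Rn n) R) < ⊤ :=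
          ENNReal.mul_lt_top (by simp) measure_ball_lt_top
        rw [lintegral_const_mul' _ _ hc.ne]
        exact ENNReal.mul_lt_top hc (h.fin _ (by positivity))

lemma LL1.conv_integrable {T : ℝ} {F : ℝ → Rn n → ℝ} (h : LL1 T F) {r : Rn n → ℝ}
    (hr : Continuous r) (hrc : HasCompactSupport r) (x : Rn n) :
    IntegrableOn (fun t => FP.conv (F t) r x) (Ioc 0 T) := by
  obtain ⟨K, S, hS0, hK, hS⟩ := kernel_bounds hr hrc
  refine ⟨((conv_meas h.meas hr).comp (measurable_id.prodMk measurable_const)).aestronglyMeasurable,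
    ?_⟩
  refine lt_of_le_of_lt (lintegral_mono fun t => enorm_conv_le (f := F t) (R := ‖x‖ + 1) hK hS
    (by simp)) ?_
  rw [lintegral_const_mul' _ _ ENNReal.ofReal_ne_top]
  exact ENNReal.mul_lt_top (by simp) (h.fin _ (by positivity))

/-- Since `p` is essentially bounded, its mollification is bounded at every point. -/
lemma conv_bdd {T C : ℝ} {p : ℝ → Rn n → ℝ} (hb : AeBdd T C p)
    {r : Rn n → ℝ} (hr : Continuous r) (hrc : HasCompactSupport r) :
    ∃ K, ∀ᵐ t ∂volume.restrict (Ioc (0:ℝ) T), ∀ x, ‖conv (p t) r x‖ ≤ K := by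
  refine ⟨∫ y, C * ‖r y‖, ?_⟩
  filter_upwards [hb] with t ht x
  rw [← integral_sub_left_eq_self (fun y => C * ‖r y‖) volume x]
  refine norm_integral_le_of_norm_le ?_ ?_
  · exact ((hr.integrable_of_hasCompactSupport hrc).norm.const_mul C).comp_sub_left x
  · filter_upwards [ht] with y hy
    rw [norm_mul]
    gcongr

/-- An `L¹([0,T], L¹_loc)` function times a bounded function supported in a fixed ball is integrable
on `(0,T] × ℝⁿ`. -/
lemma LL1.prod_integrable {T : ℝ} {F Φ : ℝ → Rn n → ℝ} (h : LL1 T F)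
    (hΦ : Measurable (uncurry Φ)) {K R : ℝ} (hR : 0 < R)
    (hK : ∀ᵐ t ∂volume.restrict (Ioc (0:ℝ) T), ∀ x, ‖Φ t x‖ ≤ K)
    (hS : ∀ t x, x ∉ ball (0 : Rn n) R → Φ t x = 0) :
    Integrable (uncurry fun t x => F t x * Φ t x)
      ((volume.restrict (Ioc (0:ℝ) T)).prod volume) := by
  have hm : Measurable (uncurry fun t x => F t x * Φ t x) := h.meas.mul hΦ
  refine ⟨hm.aestronglyMeasurable, ?_⟩
  rw [HasFiniteIntegral, lintegral_prod _ hm.enorm.aemeasurable]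
  refine lt_of_le_of_lt (b := ∫⁻ t in Ioc (0:ℝ) T, ENNReal.ofReal K
    * ∫⁻ x in ball (0 : Rn n) R, ‖F t x‖ₑ) (lintegral_mono_ae ?_) ?_
  · filter_upwards [hK] with t ht
    rw [← lintegral_const_mul' _ _ ENNReal.ofReal_ne_top, ← lintegral_indicator measurableSet_ball]
    refine lintegral_mono fun x => ?_
    by_cases hx : x ∈ ball (0 : Rn n) R
    · rw [indicator_of_mem hx]
      simp only [uncurry]
      rw [enorm_mul, mul_comm]
      gcongr
      rw [← ofReal_norm]
      exact ENNReal.ofReal_le_ofReal (ht x)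
    · simp [uncurry, hS t x hx]
  · rw [lintegral_const_mul' _ _ ENNReal.ofReal_ne_top]
    exact ENNReal.mul_lt_top (by simp) (h.fin _ hR)

end FP

/-! ### The regularized equation -/

namespace FP

variable {n m : ℕ}

lemma moll_smooth {ρ : Rn n → ℝ} (hρ : IsKernel ρ) (ε : ℝ) :
    ContDiff ℝ (⊤ : ℕ∞) (moll ρ ε) :=
  contDiff_const.mul (hρ.smooth.comp (contDiff_const_smul _))

lemma moll_compact {ρ : Rn n → ℝ} (hρ : IsKernel ρ) {ε : ℝ} (hε : 0 < ε) :
    HasCompactSupport (moll ρ ε) := by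
  have h : HasCompactSupport ρ := by
    refine (isCompact_closedBall (0 : Rn n) 1).of_isClosed_subset (isClosed_tsupport _) ?_
    exact hρ.supp.trans ball_subset_closedBall
  have h2 : HasCompactSupport (fun x => ρ (ε⁻¹ • x)) :=
    h.comp_homeomorph (Homeomorph.smulOfNeZero ε⁻¹ (by positivity))
  exact h2.mul_left

/-- The local integrability in space-time, and the boundedness of `p`, that the hypotheses of the
theorem provide. -/
structure Facts (T C : ℝ) (b : ℝ → Rn n → Rn n) (divb : ℝ → Rn n → ℝ)
    (σ : ℝ → Rn n → Fin m → Rn n) (Dσ : ℝ → Rn n → Fin m → Fin n → Fin n → ℝ)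
    (p : ℝ → Rn n → ℝ) (G : ℝ → Rn n → Fin m → ℝ) : Prop where
  bdd : AeBdd T C p
  hp : LL1 T p
  hb : ∀ i, LL1 T (fun t x => b t x i)
  hd : LL1 T divb
  hσ : ∀ k i, LL1 T (fun t x => σ t x k i)
  hDσ : ∀ k i j, LL1 T (fun t x => Dσ t x k i j)
  hdσ : ∀ k, LL1 T (fun t x => dvg Dσ t x k)
  hG : ∀ k, LL1 T (fun t x => G t x k)
  hσσ : ∀ k i j, LL1 T (fun t x => σ t x k i * σ t x k j)
  hGσ : ∀ k i, LL1 T (fun t x => G t x k * σ t x k i)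
  hpb : ∀ i, LL1 T (fun t x => p t x * b t x i)
  hpσ : ∀ k i, LL1 T (fun t x => p t x * σ t x k i)
  hpdσ : ∀ k, LL1 T (fun t x => p t x * dvg Dσ t x k)

lemma enorm_le_of_abs_le {a c : ℝ} (h : |a| ≤ c) : ‖a‖ₑ ≤ ENNReal.ofReal c := by
  rw [← ofReal_norm]; exact ENNReal.ofReal_le_ofReal h

lemma facts {T : ℝ} {b : ℝ → Rn n → Rn n} {ν : ℝ → Measure (Rn n)}
    {M : ℝ → Rn n → Fin n → Fin n → ℝ} {divb : ℝ → Rn n → ℝ}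
    {σ : ℝ → Rn n → Fin m → Rn n} {Dσ : ℝ → Rn n → Fin m → Fin n → Fin n → ℝ}
    (hmain : MainHyp T b ν M divb σ Dσ)
    {p : ℝ → Rn n → ℝ} {G : ℝ → Rn n → Fin m → ℝ} (hX : MemX T 2 p G) :
    ∃ C, Facts T C b divb σ Dσ p G := by
  obtain ⟨⟨hbm, -, hbf⟩, -, ⟨hdm, -, hdf⟩, -, ⟨hσm, hDm, -, hσf⟩, -⟩ := hmain
  obtain ⟨hpm, hGm, ⟨C, hC, hpC⟩, hGf⟩ := hX
  have mb : ∀ i, Measurable (uncurry fun t x => b t x i) := fun i =>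
    (EuclideanSpace.proj (𝕜 := ℝ) i).measurable.comp hbm
  have mσ : ∀ k i, Measurable (uncurry fun t x => σ t x k i) := fun k i =>
    (EuclideanSpace.proj (𝕜 := ℝ) i).measurable.comp ((measurable_pi_apply k).comp hσm)
  have mD : ∀ k i j, Measurable (uncurry fun t x => Dσ t x k i j) := fun k i j =>
    (measurable_pi_apply j).comp ((measurable_pi_apply i).comp ((measurable_pi_apply k).comp hDm))
  have mG : ∀ k, Measurable (uncurry fun t x => G t x k) := fun k =>
    (measurable_pi_apply k).comp hGm
  have HG : FinH T (fun t x => ENNReal.ofReal (∑ k, (G t x k) ^ 2)) := by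
    refine ⟨(Finset.measurable_fun_sum _ fun k _ => (mG k).pow_const 2).ennreal_ofReal, ?_⟩
    intro R _
    refine lt_of_le_of_lt (lintegral_mono fun t => ?_) hGf
    exact setLIntegral_le_lintegral _ _
  have HS : FinH T (fun t x => ENNReal.ofReal
      (∑ k, (‖σ t x k‖ ^ 2 + ∑ i, ∑ j, (Dσ t x k i j) ^ 2))) := by
    refine ⟨(Finset.measurable_fun_sum _ fun k _ => Measurable.add ?_ ?_).ennreal_ofReal, hσf⟩
    · exact (((measurable_pi_apply k).comp hσm).norm).pow_const 2
    · exact Finset.measurable_fun_sum _ fun i _ => Finset.measurable_fun_sum _ fun j _ =>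
        (mD k i j).pow_const 2
  have H1 : FinH T (fun _ (_ : Rn n) => (1 : ℝ≥0∞)) := FinH.const T (by simp)
  have cσ : ∀ t x k i, |σ t x k i| ≤ ‖σ t x k‖ := fun t x k i =>
    PiLp.norm_apply_le (σ t x k) i
  have kσ : ∀ t x k, ‖σ t x k‖ ^ 2 + ∑ i, ∑ j, (Dσ t x k i j) ^ 2
      ≤ ∑ k, (‖σ t x k‖ ^ 2 + ∑ i, ∑ j, (Dσ t x k i j) ^ 2) := fun t x k =>
    Finset.single_le_sum (f := fun k => ‖σ t x k‖ ^ 2 + ∑ i, ∑ j, (Dσ t x k i j) ^ 2)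
      (fun k _ => by positivity) (Finset.mem_univ k)
  have kσ' : ∀ t x k, ‖σ t x k‖ ^ 2
      ≤ ∑ k, (‖σ t x k‖ ^ 2 + ∑ i, ∑ j, (Dσ t x k i j) ^ 2) := fun t x k => by
    have : 0 ≤ ∑ i, ∑ j, (Dσ t x k i j) ^ 2 := by positivity
    linarith [kσ t x k]
  have kD : ∀ t x k i j, (Dσ t x k i j) ^ 2
      ≤ ∑ k, (‖σ t x k‖ ^ 2 + ∑ i, ∑ j, (Dσ t x k i j) ^ 2) := fun t x k i j => by
    have h1 : (Dσ t x k i j) ^ 2 ≤ ∑ j, (Dσ t x k i j) ^ 2 :=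
      Finset.single_le_sum (f := fun j => (Dσ t x k i j) ^ 2) (fun k _ => by positivity)
        (Finset.mem_univ j)
    have h2 : ∑ j, (Dσ t x k i j) ^ 2 ≤ ∑ i, ∑ j, (Dσ t x k i j) ^ 2 :=
      Finset.single_le_sum (f := fun i => ∑ j, (Dσ t x k i j) ^ 2) (fun k _ => by positivity)
        (Finset.mem_univ i)
    have : 0 ≤ ‖σ t x k‖ ^ 2 := by positivity
    linarith [kσ t x k]
  have kG : ∀ t x k, (G t x k) ^ 2 ≤ ∑ k, (G t x k) ^ 2 := fun t x k =>
    Finset.single_le_sum (f := fun k => (G t x k) ^ 2) (fun k _ => by positivity)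
      (Finset.mem_univ k)
  -- `|a| ≤ 1 + a²` turns square integrability into local integrability
  have sq_le : ∀ {a s : ℝ}, a ^ 2 ≤ s → ‖a‖ₑ ≤ 1 + ENNReal.ofReal s := by
    intro a s h
    rw [← ENNReal.ofReal_one, ← ENNReal.ofReal_add zero_le_one ((sq_nonneg a).trans h)]
    refine enorm_le_of_abs_le ?_
    nlinarith [sq_abs a, sq_nonneg (|a| - 1), abs_nonneg a]
  have hp : LL1 T p := by
    refine LL1.of_le hpm (FinH.const T hC) ?_
    filter_upwards [hpC] with t ht
    filter_upwards [ae_le_eLpNormEssSup (f := p t)] with x hx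
    rw [← eLpNorm_exponent_top] at hx
    exact hx.trans ht.2
  have hbdd : AeBdd T C.toReal p := by
    filter_upwards [hpC] with t ht
    filter_upwards [ae_le_eLpNormEssSup (f := p t)] with x hx
    rw [← eLpNorm_exponent_top] at hx
    have := ENNReal.toReal_mono hC.ne (hx.trans ht.2)
    simpa using this
  have hb : ∀ i, LL1 T (fun t x => b t x i) := by
    intro i
    refine ⟨mb i, fun R hR => lt_of_le_of_lt (lintegral_mono fun t => ?_) (hbf R hR)⟩
    refine le_trans (lintegral_mono fun x => ?_) le_self_add
    rw [← enorm_eq_nnnorm, ← ofReal_norm, ← ofReal_norm]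
    exact ENNReal.ofReal_le_ofReal (PiLp.norm_apply_le (b t x) i)
  have hσ : ∀ k i, LL1 T (fun t x => σ t x k i) := fun k i =>
    LL1.of_le' (mσ k i) (H1.add HS) fun t x => sq_le (le_trans (by
      rw [← sq_abs]; exact pow_le_pow_left₀ (abs_nonneg _) (cσ t x k i) 2) (kσ' t x k))
  have hD : ∀ k i j, LL1 T (fun t x => Dσ t x k i j) := fun k i j =>
    LL1.of_le' (mD k i j) (H1.add HS) fun t x => sq_le (kD t x k i j)
  have hdσ : ∀ k, LL1 T (fun t x => dvg Dσ t x k) := fun k =>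
    LL1.sum Finset.univ fun i => hD k i i
  have hG : ∀ k, LL1 T (fun t x => G t x k) := fun k =>
    LL1.of_le' (mG k) (H1.add HG) fun t x => sq_le (kG t x k)
  have hσσ : ∀ k i j, LL1 T (fun t x => σ t x k i * σ t x k j) := fun k i j =>
    LL1.of_le' ((mσ k i).mul (mσ k j)) HS fun t x => enorm_le_of_abs_le (by
      rw [abs_mul]
      refine le_trans ?_ (kσ' t x k)
      rw [sq]
      exact mul_le_mul (cσ t x k i) (cσ t x k j) (abs_nonneg _) (norm_nonneg _))
  have hGσ : ∀ k i, LL1 T (fun t x => G t x k * σ t x k i) := fun k i =>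
    LL1.of_le' ((mG k).mul (mσ k i)) (HG.add HS) fun t x => by
      rw [← ENNReal.ofReal_add (by positivity) (by positivity)]
      refine enorm_le_of_abs_le ?_
      have h1 := kG t x k
      have h2 := kσ' t x k
      have h3 := cσ t x k i
      rw [abs_mul]
      have h4 : |σ t x k i| ^ 2 ≤ ‖σ t x k‖ ^ 2 := pow_le_pow_left₀ (abs_nonneg _) h3 2
      nlinarith [sq_nonneg (|G t x k| - |σ t x k i|), sq_abs (G t x k), abs_nonneg (G t x k),
        abs_nonneg (σ t x k i), sq_nonneg (|G t x k|), sq_nonneg (|σ t x k i|)]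
  exact ⟨C.toReal, hbdd, hp, hb, ⟨hdm, hdf⟩, hσ, hD, hdσ, hG, hσσ, hGσ,
    fun i => (hb i).bdd_mul hpm hbdd, fun k i => (hσ k i).bdd_mul hpm hbdd,
    fun k => (hdσ k).bdd_mul hpm hbdd⟩

/-- Basic properties of a space-time test function and of its time derivative. -/
lemma TestO.props {T : ℝ} {φ : ℝ → Rn n → ℝ} (hφ : TestO T φ) :
    Continuous (uncurry φ) ∧ Continuous (uncurry (pt φ)) ∧
    ∃ K R : ℝ, 0 < R ∧ (∀ t x, ‖φ t x‖ ≤ K) ∧ (∀ t x, ‖pt φ t x‖ ≤ K) ∧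
      (∀ t x, x ∉ ball (0 : Rn n) R → φ t x = 0) ∧
      (∀ t x, x ∉ ball (0 : Rn n) R → pt φ t x = 0) := by
  obtain ⟨hs, hc, -⟩ := hφ
  have e : uncurry (pt φ) = fun z => fderiv ℝ (uncurry φ) z (1, 0) := by
    funext ⟨t, x⟩
    have h1 : HasDerivAt (fun s : ℝ => (s, x)) (1, 0) t :=
      (hasDerivAt_id t).prodMk (hasDerivAt_const t x)
    have h2 := ((hs.differentiable (by simp) (t, x)).hasFDerivAt).comp_hasDerivAt t h1
    exact h2.deriv
  have c2 : Continuous (uncurry (pt φ)) := by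
    rw [e]
    exact (hs.continuous_fderiv (by simp)).clm_apply continuous_const
  have s2 : HasCompactSupport (uncurry (pt φ)) := by
    rw [e]; exact hc.fderiv_apply (𝕜 := ℝ) _
  obtain ⟨K1, hK1⟩ := hc.exists_bound_of_continuous hs.continuous
  obtain ⟨K2, hK2⟩ := s2.exists_bound_of_continuous c2
  obtain ⟨S, hS⟩ := hc.isCompact.isBounded.subset_ball (0 : ℝ × Rn n)
  have hz : ∀ t x, x ∉ ball (0 : Rn n) (max S 1) → φ t x = 0 := by
    intro t x hx
    by_contra h
    have := hS (subset_tsupport _ (show (t, x) ∈ support (uncurry φ) from h))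
    apply hx
    simp only [mem_ball, dist_zero_right, Prod.norm_def] at this ⊢
    exact lt_of_le_of_lt (le_max_right _ _) (this.trans_le (le_max_left _ _))
  refine ⟨hs.continuous, c2, max K1 K2, max S 1, by positivity,
    fun t x => (hK1 (t, x)).trans (le_max_left _ _),
    fun t x => (hK2 (t, x)).trans (le_max_right _ _), hz, fun t x hx => ?_⟩
  simp [pt, hz _ x hx]

lemma compact_of_zero {f : Rn n → ℝ} {R : ℝ} (h : ∀ x, x ∉ ball (0 : Rn n) R → f x = 0) :
    HasCompactSupport f := by
  refine HasCompactSupport.intro (isCompact_closedBall (0 : Rn n) R) fun x hx => h x ?_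
  exact fun h' => hx (ball_subset_closedBall h')

lemma TestO.slice {T : ℝ} {φ : ℝ → Rn n → ℝ} (hφ : TestO T φ) (t : ℝ) : TestS (φ t) := by
  obtain ⟨-, -, K, R, -, -, -, h, -⟩ := hφ.props
  exact ⟨hφ.1.comp (contDiff_const.prodMk contDiff_id), compact_of_zero (h t)⟩

lemma integrable_mul_bdd {T : ℝ} {f η : ℝ → ℝ} (hf : IntegrableOn f (Ioc 0 T))
    (hη : Continuous η) : IntegrableOn (fun t => f t * η t) (Ioc 0 T) := by
  obtain ⟨K, hK⟩ := (isCompact_Icc (a := (0:ℝ)) (b := T)).exists_bound_of_continuousOn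
    hη.continuousOn
  refine Integrable.mul_bdd (c := K) hf hη.aestronglyMeasurable ?_
  filter_upwards [ae_restrict_mem measurableSet_Ioc] with t ht
  exact hK t (Ioc_subset_Icc_self ht)

section Kernel

variable {T C : ℝ} {b : ℝ → Rn n → Rn n} {divb : ℝ → Rn n → ℝ}
    {σ : ℝ → Rn n → Fin m → Rn n} {Dσ : ℝ → Rn n → Fin m → Fin n → Fin n → ℝ}
    {p : ℝ → Rn n → ℝ} {G : ℝ → Rn n → Fin m → ℝ} {r : Rn n → ℝ}

lemma Facts.qE_LL1 (F : Facts T C b divb σ Dσ p G) (hr : ContDiff ℝ (⊤ : ℕ∞) r)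
    (hrc : HasCompactSupport r) : LL1 T (fun t => qE r (b t) (σ t) (p t) (G t)) := by
  have h1 := (LL1.sum Finset.univ fun i =>
    (F.hpb i).conv (pd_smooth hr i).continuous (pd_compact hrc i)).neg
  have h2 := (LL1.sum Finset.univ fun k => LL1.sum Finset.univ fun i =>
    (F.hGσ k i).conv (pd_smooth hr i).continuous (pd_compact hrc i)).const_mul (1/2)
  exact h1.add h2

/-- Testing the weak formulation with `η(t) ρ_ε(x - y)` shows that, for each fixed `x`, the function
`t ↦ p_ε(t,x)` has weak derivative `qE`. -/
lemma Facts.kernel_eq (F : Facts T C b divb σ Dσ p G) (hr : ContDiff ℝ (⊤ : ℕ∞) r)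
    (hrc : HasCompactSupport r) {p0 : Rn n → ℝ} (hsol : IsWeakSol T b σ p G p0) (x : Rn n)
    (η : ℝ → ℝ) (hη : ContDiff ℝ (⊤ : ℕ∞) η) (h0 : ∀ t, (t ≤ 0 ∨ T ≤ t) → η t = 0) :
    ∫ t in Ioc 0 T, conv (p t) r x * deriv η t
      = - ∫ t in Ioc 0 T, qE r (b t) (σ t) (p t) (G t) x * η t := by
  have hηc : HasCompactSupport η := by
    refine HasCompactSupport.intro (isCompact_Icc (a := (0:ℝ)) (b := T)) fun t ht => h0 t ?_
    by_contra! h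
    exact ht ⟨h.1.le, h.2.le⟩
  set φ : ℝ → Rn n → ℝ := fun t y => η t * r (x - y) with hφ
  have hT : TestT T φ := by
    refine ⟨?_, ?_, fun t y ht => by simp [hφ, h0 t (Or.inr ht)]⟩
    · exact (hη.comp contDiff_fst).mul ((reflect_smooth hr x).comp contDiff_snd)
    · refine HasCompactSupport.intro (hηc.isCompact.prod (reflect_compact hrc x).isCompact) ?_
      rintro ⟨t, y⟩ hty
      simp only [mem_prod, not_and_or] at hty
      simp only [hφ, uncurry]
      rcases hty with h | h
      · rw [image_eq_zero_of_notMem_tsupport h, zero_mul]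
      · rw [image_eq_zero_of_notMem_tsupport (f := fun y => r (x - y)) h, mul_zero]
  have key := hsol φ hT
  have e1 : ∀ t, ∫ y, p t y * pt φ t y = conv (p t) r x * deriv η t := by
    intro t
    rw [conv, ← integral_mul_const]
    congr 1
    funext y
    simp only [pt, hφ]
    rw [deriv_mul_const (hη.differentiable (by simp) t)]
    ring
  have e2 : ∀ t y v, ⟪v, gradient (φ t) y⟫ = ∑ i, v i * (η t * - pd i r (x - y)) := by
    intro t y v
    rw [inner_gradient_eq, fderiv_eq_sum]
    refine Finset.sum_congr rfl fun i _ => ?_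
    rw [← reflect_pd hr]
    congr 1
    simp only [pd, hφ]
    rw [fderiv_const_mul ((reflect_smooth hr x).differentiable (by simp) y)]
    simp
  have kc : ∀ i, Continuous (fun y => pd i r (x - y)) := fun i =>
    (reflect_smooth (pd_smooth hr i) x).continuous
  have kk : ∀ i, HasCompactSupport (fun y => pd i r (x - y)) := fun i =>
    reflect_compact (pd_compact hrc i) x
  have e3 : ∀ᵐ t ∂volume.restrict (Ioc (0:ℝ) T), ∫ y, p t y * ⟪b t y, gradient (φ t) y⟫
      = - ((∑ i, conv (fun y => p t y * b t y i) (pd i r) x) * η t) := by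
    filter_upwards [ae_all_iff.2 fun i => (F.hpb i).ae_LI] with t ht
    simp only [conv]
    rw [← integral_finsetSum _ fun i _ => LI_mul (ht i) (kc i) (kk i), ← integral_mul_const,
      ← integral_neg]
    congr 1
    funext y
    rw [e2, Finset.mul_sum, Finset.sum_mul, ← Finset.sum_neg_distrib]
    exact Finset.sum_congr rfl fun i _ => by ring
  have e4 : ∀ᵐ t ∂volume.restrict (Ioc (0:ℝ) T), ∫ y, ∑ k, G t y k * ⟪σ t y k, gradient (φ t) y⟫
      = - ((∑ k, ∑ i, conv (fun y => G t y k * σ t y k i) (pd i r) x) * η t) := by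
    filter_upwards [ae_all_iff.2 fun k => ae_all_iff.2 fun i => (F.hGσ k i).ae_LI] with t ht
    simp only [conv]
    have hi : ∀ k i, Integrable (fun y => G t y k * σ t y k i * pd i r (x - y)) := fun k i =>
      LI_mul (ht k i) (kc i) (kk i)
    have : ∀ k, ∑ i, ∫ y, G t y k * σ t y k i * pd i r (x - y)
        = ∫ y, ∑ i, G t y k * σ t y k i * pd i r (x - y) := fun k =>
      (integral_finsetSum _ fun i _ => hi k i).symm
    simp only [this]
    rw [← integral_finsetSum _ fun k _ => integrable_finsetSum _ fun i _ => hi k i,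
      ← integral_mul_const, ← integral_neg]
    congr 1
    funext y
    rw [Finset.sum_mul, ← Finset.sum_neg_distrib]
    refine Finset.sum_congr rfl fun k _ => ?_
    rw [e2, Finset.mul_sum, Finset.sum_mul, ← Finset.sum_neg_distrib]
    exact Finset.sum_congr rfl fun i _ => by ring
  -- the initial datum plays no role, as `η` vanishes at time `0`
  have e5 : ∀ y, φ 0 y = 0 := fun y => by simp [hφ, h0 0 (Or.inl le_rfl)]
  have i1 : IntegrableOn (fun t => (∑ i, conv (fun y => p t y * b t y i) (pd i r) x) * η t)
      (Ioc 0 T) :=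
    integrable_mul_bdd (integrable_finsetSum _ fun i _ =>
      (F.hpb i).conv_integrable (pd_smooth hr i).continuous (pd_compact hrc i) x) hη.continuous
  have i2 : IntegrableOn
      (fun t => (∑ k, ∑ i, conv (fun y => G t y k * σ t y k i) (pd i r) x) * η t) (Ioc 0 T) :=
    integrable_mul_bdd (integrable_finsetSum _ fun k _ => integrable_finsetSum _ fun i _ =>
      (F.hGσ k i).conv_integrable (pd_smooth hr i).continuous (pd_compact hrc i) x) hη.continuous
  simp only [e1, e5, mul_zero, integral_zero, add_zero] at key
  rw [integral_congr_ae e3, integral_congr_ae e4, integral_neg, integral_neg] at key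
  rw [key]
  have : ∀ t, qE r (b t) (σ t) (p t) (G t) x * η t
      = -((∑ i, conv (fun y => p t y * b t y i) (pd i r) x) * η t)
        + (1/2) * ((∑ k, ∑ i, conv (fun y => G t y k * σ t y k i) (pd i r) x) * η t) := by
    intro t; simp only [qE]; ring
  simp only [this]
  have i1n : IntegrableOn (fun t => -((∑ i, conv (fun y => p t y * b t y i) (pd i r) x) * η t))
      (Ioc 0 T) := i1.neg
  rw [integral_add i1n (i2.const_mul _), integral_neg, integral_const_mul]
  ring

/-- The chain rule in time, integrated in space: `∂_t β(p_ε) = β'(p_ε) qE` weakly. -/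
lemma Facts.time_identity (hT : 0 < T) (F : Facts T C b divb σ Dσ p G)
    (hr : ContDiff ℝ (⊤ : ℕ∞) r) (hrc : HasCompactSupport r) {p0 : Rn n → ℝ}
    (hsol : IsWeakSol T b σ p G p0) {β : ℝ → ℝ} (hβ : ContDiff ℝ 1 β)
    {φ : ℝ → Rn n → ℝ} (hφ : TestO T φ) :
    Integrable (uncurry fun t x => β (conv (p t) r x) * pt φ t x)
      ((volume.restrict (Ioc (0:ℝ) T)).prod volume) ∧
    Integrable (uncurry fun t x =>
      deriv β (conv (p t) r x) * qE r (b t) (σ t) (p t) (G t) x * φ t x)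
      ((volume.restrict (Ioc (0:ℝ) T)).prod volume) ∧
    ∫ t in Ioc (0:ℝ) T, ∫ x, β (conv (p t) r x) * pt φ t x
      = - ∫ t in Ioc (0:ℝ) T, ∫ x,
          deriv β (conv (p t) r x) * qE r (b t) (σ t) (p t) (G t) x * φ t x := by
  obtain ⟨cφ, cφt, K, R, hR, hK, hKt, hz, hzt⟩ := hφ.props
  obtain ⟨U, hU⟩ := conv_bdd F.bdd hr.continuous hrc
  have hβ' : Continuous (deriv β) := hβ.continuous_deriv le_rfl
  obtain ⟨B, hB⟩ := (isCompact_closedBall (0:ℝ) U).exists_bound_of_continuousOn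
    hβ.continuous.continuousOn
  obtain ⟨B', hB'⟩ := (isCompact_closedBall (0:ℝ) U).exists_bound_of_continuousOn
    hβ'.continuousOn
  have mu : Measurable (uncurry fun t x => conv (p t) r x) := conv_meas F.hp.meas hr.continuous
  have I1 : Integrable (uncurry fun t x => β (conv (p t) r x) * pt φ t x)
      ((volume.restrict (Ioc (0:ℝ) T)).prod volume) := by
    have h1 : LL1 T (fun _ (_ : Rn n) => (1:ℝ)) :=
      LL1.of_le' measurable_const (FinH.const T (C := 1) (by simp)) fun _ _ => by simp
    have := h1.prod_integrable (Φ := fun t x => β (conv (p t) r x) * pt φ t x)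
      ((hβ.continuous.measurable.comp mu).mul cφt.measurable) (K := B * K) hR ?_ ?_
    · simpa using this
    · filter_upwards [hU] with t ht x
      rw [norm_mul]
      have := hB _ (mem_closedBall_zero_iff.2 (ht x))
      exact mul_le_mul this (hKt t x) (norm_nonneg _) ((norm_nonneg _).trans this)
    · intro t x hx
      simp [hzt t x hx]
  have I2 : Integrable (uncurry fun t x =>
      deriv β (conv (p t) r x) * qE r (b t) (σ t) (p t) (G t) x * φ t x)
      ((volume.restrict (Ioc (0:ℝ) T)).prod volume) := by
    have := (F.qE_LL1 hr hrc).prod_integrable (Φ := fun t x => deriv β (conv (p t) r x) * φ t x)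
      ((hβ'.measurable.comp mu).mul cφ.measurable) (K := B' * K) hR ?_ ?_
    · refine this.congr (Eventually.of_forall fun z => ?_)
      simp only [uncurry]; ring
    · filter_upwards [hU] with t ht x
      rw [norm_mul]
      have := hB' _ (mem_closedBall_zero_iff.2 (ht x))
      exact mul_le_mul this (hK t x) (norm_nonneg _) ((norm_nonneg _).trans this)
    · intro t x hx
      simp [hz t x hx]
  refine ⟨I1, I2, ?_⟩
  -- for fixed `x` this is the one-variable chain rule along `t ↦ p_ε(t,x)`
  rw [integral_integral_swap I1, integral_integral_swap I2, ← integral_neg]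
  congr 1
  funext x
  refine chain_one_dim hT (F.hp.conv_integrable hr.continuous hrc x) ?_
    (F.kernel_eq hr hrc hsol x) hβ (θ := fun t => φ t x) ?_ ?_ ?_
  · have h1 := integrable_finsetSum Finset.univ fun i _ =>
      (F.hpb i).conv_integrable (pd_smooth hr i).continuous (pd_compact hrc i) x
    have h2 := integrable_finsetSum Finset.univ fun k _ => integrable_finsetSum Finset.univ
      fun i _ => (F.hGσ k i).conv_integrable (pd_smooth hr i).continuous (pd_compact hrc i) x
    exact h1.neg.add (h2.const_mul _)
  · exact (hφ.1.comp (contDiff_id.prodMk contDiff_const)).of_le (by simp)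
  · exact hφ.2.2 0 x (Or.inl le_rfl)
  · exact hφ.2.2 T x (Or.inr le_rfl)

end Kernel

/-- Each term on the left of the chain rule is a locally integrable coefficient times a continuous
compactly supported function of `x`. -/
lemma lhs_integrable {r : Rn n → ℝ} (hr : ContDiff ℝ (⊤ : ℕ∞) r) (hrc : HasCompactSupport r)
    {b : Rn n → Rn n} {d p : Rn n → ℝ} {σ : Rn n → Fin m → Rn n}
    (hb : ∀ i, LocallyIntegrable (fun x => b x i)) (hd : LocallyIntegrable d)
    (hσσ : ∀ k i j, LocallyIntegrable (fun x => σ x k i * σ x k j))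
    (hp : LocallyIntegrable p) {β : ℝ → ℝ} (hβ : ContDiff ℝ 2 β) {φ : Rn n → ℝ} (hφ : TestS φ)
    {h : Rn n → ℝ} (hh : Continuous h) (hhc : HasCompactSupport h) :
    Integrable (fun x => - β (conv p r x) * h x
          - β (conv p r x) * ⟪b x, gradient φ x⟫
          + (1/2) * deriv β (conv p r x)
              * ∑ k, ⟪σ x k, gradient φ x⟫ * sgradE r σ p k x
          - (β (conv p r x) - conv p r x * deriv β (conv p r x)) * d x * φ x
          + (1/2) * deriv (deriv β) (conv p r x)
              * (∑ k, (sgradE r σ p k x) ^ 2) * φ x) := by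
  have hβ' : ContDiff ℝ 1 (deriv β) := by
    have := (contDiff_succ_iff_deriv (n := 1) (f := β)).1 (by simpa [one_add_one_eq_two] using hβ)
    exact this.2.2
  have cu : Continuous (conv p r) := (conv_smooth hp hr hrc).continuous
  have cpu : ∀ j, Continuous (conv p (pd j r)) := fun j =>
    (conv_smooth hp (pd_smooth hr j) (pd_compact hrc j)).continuous
  have c0 : Continuous (fun x => β (conv p r x)) := hβ.continuous.comp cu
  have c1 : Continuous (fun x => deriv β (conv p r x)) := hβ'.continuous.comp cu
  have c2 : Continuous (fun x => deriv (deriv β) (conv p r x)) :=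
    (hβ'.continuous_deriv le_rfl).comp cu
  have cφ : Continuous φ := hφ.1.continuous
  have cpφ : ∀ i, Continuous (pd i φ) := fun i => (pd_smooth hφ.1 i).continuous
  have kpφ : ∀ i, HasCompactSupport (pd i φ) := fun i => pd_compact hφ.2 i
  have t1 : Integrable (fun x => - β (conv p r x) * h x) :=
    (c0.neg.mul hh).integrable_of_hasCompactSupport hhc.mul_left
  have t2 : Integrable (fun x => β (conv p r x) * ⟪b x, gradient φ x⟫) := by
    have := integrable_finsetSum Finset.univ fun i _ =>
      LI_mul (hb i) (c0.mul (cpφ i)) (kpφ i).mul_left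
    refine this.congr (Eventually.of_forall fun x => ?_)
    simp only [inner_gradient_eq, fderiv_eq_sum, Finset.mul_sum]
    exact Finset.sum_congr rfl fun i _ => by simp only [Pi.mul_apply]; ring
  have t3 : Integrable (fun x => (1/2) * deriv β (conv p r x)
      * ∑ k, ⟪σ x k, gradient φ x⟫ * sgradE r σ p k x) := by
    have := integrable_finsetSum Finset.univ fun k _ => integrable_finsetSum Finset.univ
      fun i _ => integrable_finsetSum Finset.univ fun j _ =>
      (LI_mul (hσσ k i j) ((c1.mul (cpu j)).mul (cpφ i)) (kpφ i).mul_left).const_mul (1/2)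
    refine this.congr (Eventually.of_forall fun x => ?_)
    simp only [inner_gradient_eq, fderiv_eq_sum, sgradE, Finset.mul_sum, Finset.sum_mul]
    refine Finset.sum_congr rfl fun k _ => ?_
    rw [Finset.sum_comm]
    refine Finset.sum_congr rfl fun i _ => Finset.sum_congr rfl fun j _ => ?_
    simp only [Pi.mul_apply]; ring
  have t4 : Integrable (fun x =>
      (β (conv p r x) - conv p r x * deriv β (conv p r x)) * d x * φ x) := by
    refine (LI_mul hd ((c0.sub (cu.mul c1)).mul cφ) hφ.2.mul_left).congr
      (Eventually.of_forall fun x => ?_)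
    simp only [Pi.mul_apply, Pi.sub_apply]; ring
  have t5 : Integrable (fun x => (1/2) * deriv (deriv β) (conv p r x)
      * (∑ k, (sgradE r σ p k x) ^ 2) * φ x) := by
    have := integrable_finsetSum Finset.univ fun k _ => integrable_finsetSum Finset.univ
      fun i _ => integrable_finsetSum Finset.univ fun j _ =>
      (LI_mul (hσσ k i j) ((c2.mul ((cpu i).mul (cpu j))).mul cφ) hφ.2.mul_left).const_mul (1/2)
    refine this.congr (Eventually.of_forall fun x => ?_)
    simp only [sgradE, Finset.mul_sum, Finset.sum_mul, sq]
    refine Finset.sum_congr rfl fun k _ => ?_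
    rw [Finset.sum_comm]
    refine Finset.sum_congr rfl fun i _ => Finset.sum_congr rfl fun j _ => ?_
    simp only [Pi.mul_apply]; ring
  exact (((t1.sub t2).add t3).sub t4).add t5

/-- Adding to the integrand a function of zero integral does not change the integral, whether or
not the other summand is integrable. -/
lemma integral_add_of_zero {α : Type*} [MeasurableSpace α] {μ : Measure α} {f g : α → ℝ}
    (hg : Integrable g μ) (h0 : ∫ a, g a ∂μ = 0) : ∫ a, (f a + g a) ∂μ = ∫ a, f a ∂μ := by
  by_cases hf : Integrable f μ
  · rw [integral_add hf hg, h0, add_zero]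
  · rw [integral_undef hf, integral_undef]
    intro h
    exact hf ((h.sub hg).congr (Eventually.of_forall fun a => by simp))

end FP

/-! ### The chain rule -/

/-- **Chain rule for the regularized solution.** Under the assumptions of the main
theorem, if `p ∈ X₂` is a weak solution then `p_ε = ρ_ε ∗ p ∈ W^{1,1}_loc([0,T]×ℝⁿ)` and,
for every `β ∈ C²(ℝ)`, in the distributional sense on `(0,T)×ℝⁿ`:
`∂_t β(p_ε) + ∂_i(β(p_ε)b_i) − ½∂_i(σ_{ik}σ_{jk}∂_j β(p_ε)) − (β(p_ε)−p_ε β'(p_ε)) div(b)`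
`+ ½β''(p_ε)|σ^*∇p_ε|² = β'(p_ε)[U_ε − Q_{2,ε} + ½ ∂_i(σ_{ik}R_{k,ε})]`. -/
theorem chain_rule_regularized (n m : ℕ) (hn : 1 ≤ n) (hm : 1 ≤ m) (T : ℝ) (hT : 0 < T)
    (ρ : Rn n → ℝ) (hρ : FP.IsKernel ρ)
    (b : ℝ → Rn n → Rn n) (ν : ℝ → Measure (Rn n)) (M : ℝ → Rn n → Fin n → Fin n → ℝ)
    (divb : ℝ → Rn n → ℝ)
    (σ : ℝ → Rn n → Fin m → Rn n) (Dσ : ℝ → Rn n → Fin m → Fin n → Fin n → ℝ)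
    (hmain : FP.MainHyp T b ν M divb σ Dσ)
    (p : ℝ → Rn n → ℝ) (G : ℝ → Rn n → Fin m → ℝ) (p0 : Rn n → ℝ)
    (hX : FP.MemX T 2 p G) (hG : FP.IsSigmaGrad T σ Dσ p G)
    (hsol : FP.IsWeakSol T b σ p G p0)
    (ε : ℝ) (hε : 0 < ε) :
    (∃ q : ℝ → Rn n → ℝ,
      (∀ φ : ℝ → Rn n → ℝ, FP.TestO T φ →
        (∫ t in Ioc (0:ℝ) T, ∫ x, FP.conv (p t) (FP.moll ρ ε) x * FP.pt φ t x)
          = - ∫ t in Ioc (0:ℝ) T, ∫ x, q t x * φ t x) ∧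
      (∀ R : ℝ, 0 < R →
        (∫⁻ t in Ioc (0:ℝ) T, ∫⁻ x in ball (0 : Rn n) R,
          (ENNReal.ofReal |FP.conv (p t) (FP.moll ρ ε) x|
            + ENNReal.ofReal |q t x|
            + ENNReal.ofReal (∑ j, |FP.conv (p t) (FP.pd j (FP.moll ρ ε)) x|))) < ⊤)) ∧
    (∀ β : ℝ → ℝ, ContDiff ℝ 2 β → ∀ φ : ℝ → Rn n → ℝ, FP.TestO T φ →
      (∫ t in Ioc (0:ℝ) T, ∫ x,
        (- β (FP.conv (p t) (FP.moll ρ ε) x) * FP.pt φ t x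
          - β (FP.conv (p t) (FP.moll ρ ε) x) * ⟪b t x, gradient (φ t) x⟫
          + (1/2) * deriv β (FP.conv (p t) (FP.moll ρ ε) x)
              * ∑ k, ⟪σ t x k, gradient (φ t) x⟫
                  * FP.sgradE (FP.moll ρ ε) (σ t) (p t) k x
          - (β (FP.conv (p t) (FP.moll ρ ε) x)
              - FP.conv (p t) (FP.moll ρ ε) x * deriv β (FP.conv (p t) (FP.moll ρ ε) x))
              * divb t x * φ t x
          + (1/2) * deriv (deriv β) (FP.conv (p t) (FP.moll ρ ε) x)
              * (∑ k, (FP.sgradE (FP.moll ρ ε) (σ t) (p t) k x) ^ 2) * φ t x))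
      = ∫ t in Ioc (0:ℝ) T, ∫ x,
          (deriv β (FP.conv (p t) (FP.moll ρ ε) x)
              * (FP.Uterm (FP.moll ρ ε) (divb t) (σ t) (FP.dvg Dσ t) (p t) (G t) x
                  - FP.commDer (FP.moll ρ ε) (b t) (divb t) (p t) x) * φ t x
            - (1/2) * ∑ k, FP.Rterm (FP.moll ρ ε) (σ t) (FP.dvg Dσ t) (p t) k x
                * (deriv β (FP.conv (p t) (FP.moll ρ ε) x) * ⟪σ t x k, gradient (φ t) x⟫
                    + φ t x * deriv (deriv β) (FP.conv (p t) (FP.moll ρ ε) x)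
                        * FP.sgradE (FP.moll ρ ε) (σ t) (p t) k x))) := by
  have hr := FP.moll_smooth hρ ε
  have hrc := FP.moll_compact hρ hε
  obtain ⟨C, F⟩ := FP.facts hmain hX
  refine ⟨⟨fun t => FP.qE (FP.moll ρ ε) (b t) (σ t) (p t) (G t), fun φ hφ => ?_, fun R hR => ?_⟩,
    fun β hβ φ hφ => ?_⟩
  · have h := (F.time_identity hT hr hrc hsol (β := id) contDiff_id hφ).2.2
    simpa using h
  · have h := ((F.hp.conv hr.continuous hrc).toFinH.add (F.qE_LL1 hr hrc).toFinH).add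
      (FP.FinH.sum Finset.univ fun j =>
        (F.hp.conv (FP.pd_smooth hr j).continuous (FP.pd_compact hrc j)).toFinH)
    refine lt_of_eq_of_lt ?_ (h.fin R hR)
    simp only [Real.enorm_eq_ofReal_abs,
      ENNReal.ofReal_sum_of_nonneg fun _ _ => abs_nonneg _]
  · have hβ1 : ContDiff ℝ 1 β := hβ.of_le (by norm_num)
    obtain ⟨I1, I2, I3⟩ := F.time_identity hT hr hrc hsol hβ1 hφ
    obtain ⟨-, cφt, K, R, hR, -, -, -, hzt⟩ := hφ.props
    set u : ℝ → Rn n → ℝ := fun t x => FP.conv (p t) (FP.moll ρ ε) x with hu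
    set q : ℝ → Rn n → ℝ :=
      fun t x => FP.qE (FP.moll ρ ε) (b t) (σ t) (p t) (G t) x with hq
    -- `D t` is the spatial integral of the time-derivative terms; it need not vanish for fixed `t`,
    -- only after integration in `t`.
    set D : ℝ → ℝ := fun t =>
      (∫ x, β (u t x) * FP.pt φ t x) + ∫ x, deriv β (u t x) * q t x * φ t x with hD
    have J1 : IntegrableOn (fun t => ∫ x, β (u t x) * FP.pt φ t x) (Ioc 0 T) :=
      I1.integral_prod_left
    have J2 : IntegrableOn (fun t => ∫ x, deriv β (u t x) * q t x * φ t x) (Ioc 0 T) :=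
      I2.integral_prod_left
    have D1 : IntegrableOn D (Ioc 0 T) := J1.add J2
    have D0 : ∫ t in Ioc 0 T, D t = 0 := by
      rw [hD, integral_add J1 J2, I3]
      ring
    rw [← FP.integral_add_of_zero (μ := volume.restrict (Ioc 0 T)) (g := D) D1 D0]
    refine integral_congr_ae ?_
    obtain ⟨-, -, ⟨-, hdiv, -⟩, -, ⟨-, -, hDσ, -⟩, -⟩ := hmain
    filter_upwards [hdiv, hDσ, hG, I1.prod_right_ae, I2.prod_right_ae, F.hp.ae_LI, F.hd.ae_LI,
      ae_all_iff.2 fun i => (F.hb i).ae_LI,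
      ae_all_iff.2 fun k => ae_all_iff.2 fun i => (F.hσ k i).ae_LI,
      ae_all_iff.2 fun k => ae_all_iff.2 fun i => ae_all_iff.2 fun j => (F.hDσ k i j).ae_LI,
      ae_all_iff.2 fun k => (F.hdσ k).ae_LI,
      ae_all_iff.2 fun k => (F.hG k).ae_LI,
      ae_all_iff.2 fun k => ae_all_iff.2 fun i => ae_all_iff.2 fun j => (F.hσσ k i j).ae_LI,
      ae_all_iff.2 fun k => ae_all_iff.2 fun i => (F.hpσ k i).ae_LI,
      ae_all_iff.2 fun k => (F.hpdσ k).ae_LI]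
      with t tdiv tDσ tG tI1 tI2 tp td tb tσ tD tdσ tGl tσσ tpσ tpdσ
    have hσdiv : ∀ k, FP.HasWeakDiv (fun x => σ t x k) (fun x => FP.dvg Dσ t x k) := fun k =>
      FP.HasWeakDiv.of_pd (c := fun x => σ t x k) (D := fun x => Dσ t x k) (tσ k)
        (fun i j => tD k i j) (fun i j => tDσ k i j)
    obtain ⟨E, hE, hE0, hEeq⟩ := FP.spatial_identity hr hrc tb td tdiv tσ tdσ hσdiv tp tpσ tpdσ tGl
      tG hβ (hφ.slice t) (FP.pt φ t)
    have hL := FP.lhs_integrable hr hrc tb td tσσ tp hβ (hφ.slice t) (h := FP.pt φ t)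
      (cφt.comp (Continuous.prodMk_right t)) (FP.compact_of_zero (hzt t))
    have K1 : Integrable (fun x => β (u t x) * FP.pt φ t x) := tI1
    have K2 : Integrable (fun x => deriv β (u t x) * q t x * φ t x) := tI2
    have hDt : D t = ∫ x, (β (u t x) * FP.pt φ t x + deriv β (u t x) * q t x * φ t x) :=
      (integral_add K1 K2).symm
    have K12 : Integrable
        (fun x => β (u t x) * FP.pt φ t x + deriv β (u t x) * q t x * φ t x) := K1.add K2
    rw [hDt, ← integral_add hL K12]
    refine Eq.trans ?_ (FP.integral_add_of_zero (μ := volume) hE hE0)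
    congr 1
    funext x
    rw [hEeq x]
    simp only [hu, hq]
    ring
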